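/- Let (α, β) be an admissible pair and λ > 0. If there exists a weak super-solution U of (P)_{λ,α,β}, then there exists a weak solution u of (P)_{λ,α,β} with α ≤ u ≤ U almost everywhere in B. -/

import Mathlib

open MeasureTheory Metric Set Filter

/-- The Laplacian of `u : ℝ^N → ℝ`, as the sum of pure second partial derivatives. -/
noncomputable def lap {N : ℕ} (u : EuclideanSpace ℝ (Fin N) → ℝ) (x : EuclideanSpace ℝ (Fin N)) : ℝ :=
  ∑ i : Fin N, fderiv ℝ (fun y => fderiv ℝ u y (EuclideanSpace.single i 1)) x
    (EuclideanSpace.single i 1)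

/-- The biharmonic operator `Δ²`. -/
noncomputable def biharm {N : ℕ} (u : EuclideanSpace ℝ (Fin N) → ℝ)
    (x : EuclideanSpace ℝ (Fin N)) : ℝ :=
  lap (lap u) x

/-- `Φ(x) = (α - β/2) + (β/2)|x|²`, the biharmonic extension of the boundary data `(α, β)`. -/
noncomputable def Phi {N : ℕ} (α β : ℝ) (x : EuclideanSpace ℝ (Fin N)) : ℝ :=
  (α - β / 2) + (β / 2) * ‖x‖ ^ 2

/-- A pair `(α, β)` is admissible if `β ≤ 0` and `α - β/2 < 1`. -/
def Admissible (α β : ℝ) : Prop := β ≤ 0 ∧ α - β / 2 < 1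

/-- Test functions: `φ ∈ C⁴(B̄)` with `φ = 0` and `∇φ = 0` on `∂B`. -/
def IsTest (N : ℕ) (φ : EuclideanSpace ℝ (Fin N) → ℝ) : Prop :=
  ContDiffOn ℝ 4 φ (closedBall (0 : EuclideanSpace ℝ (Fin N)) 1) ∧
    (∀ x : EuclideanSpace ℝ (Fin N), ‖x‖ = 1 → φ x = 0) ∧
    (∀ x : EuclideanSpace ℝ (Fin N), ‖x‖ = 1 →
      fderivWithin ℝ φ (closedBall (0 : EuclideanSpace ℝ (Fin N)) 1) x = 0)

/-- A weak solution of `(P)_{λ,α,β}` on the unit ball. -/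
def IsWeakSolutionAB (N : ℕ) (lam α β : ℝ) (u : EuclideanSpace ℝ (Fin N) → ℝ) : Prop :=
  (∀ᵐ x ∂(volume.restrict (ball (0 : EuclideanSpace ℝ (Fin N)) 1)), α ≤ u x ∧ u x ≤ 1) ∧
    IntegrableOn (fun x => ((1 - u x) ^ 2)⁻¹) (ball (0 : EuclideanSpace ℝ (Fin N)) 1) ∧
    ∀ φ : EuclideanSpace ℝ (Fin N) → ℝ, IsTest N φ →
      ∫ x in ball (0 : EuclideanSpace ℝ (Fin N)) 1, (u x - Phi α β x) * biharm φ x =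
        lam * ∫ x in ball (0 : EuclideanSpace ℝ (Fin N)) 1, φ x / (1 - u x) ^ 2

/-- A weak super-solution of `(P)_{λ,α,β}` on the unit ball. -/
def IsWeakSuperSolutionAB (N : ℕ) (lam α β : ℝ) (u : EuclideanSpace ℝ (Fin N) → ℝ) : Prop :=
  (∀ᵐ x ∂(volume.restrict (ball (0 : EuclideanSpace ℝ (Fin N)) 1)), α ≤ u x ∧ u x ≤ 1) ∧
    IntegrableOn (fun x => ((1 - u x) ^ 2)⁻¹) (ball (0 : EuclideanSpace ℝ (Fin N)) 1) ∧
    ∀ φ : EuclideanSpace ℝ (Fin N) → ℝ, IsTest N φ →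
      (∀ x ∈ closedBall (0 : EuclideanSpace ℝ (Fin N)) 1, 0 ≤ φ x) →
      ∫ x in ball (0 : EuclideanSpace ℝ (Fin N)) 1, (u x - Phi α β x) * biharm φ x ≥
        lam * ∫ x in ball (0 : EuclideanSpace ℝ (Fin N)) 1, φ x / (1 - u x) ^ 2

/-- A classical solution of `(P)_{λ,α,β}` on the unit ball: `u ∈ C⁴(B̄)`, `α < u < 1` in `B`,
`Δ²u = λ(1-u)⁻²` in `B`, and `u = α`, `∂_ν u = β` on `∂B`. -/
structure IsClassicalSolutionAB (N : ℕ) (lam α β : ℝ)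
    (u : EuclideanSpace ℝ (Fin N) → ℝ) : Prop where
  contDiffOn : ContDiffOn ℝ 4 u (closedBall (0 : EuclideanSpace ℝ (Fin N)) 1)
  gt_alpha : ∀ x ∈ ball (0 : EuclideanSpace ℝ (Fin N)) 1, α < u x
  lt_one : ∀ x ∈ ball (0 : EuclideanSpace ℝ (Fin N)) 1, u x < 1
  eqn : ∀ x ∈ ball (0 : EuclideanSpace ℝ (Fin N)) 1, biharm u x = lam / (1 - u x) ^ 2
  bdry : ∀ x : EuclideanSpace ℝ (Fin N), ‖x‖ = 1 → u x = α
  bdry_deriv : ∀ x : EuclideanSpace ℝ (Fin N), ‖x‖ = 1 →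
    fderivWithin ℝ u (closedBall (0 : EuclideanSpace ℝ (Fin N)) 1) x x = β

/-- The set of voltages `λ > 0` for which `(P)_{λ,α,β}` admits a classical solution;
the pull-in voltage `λ*(α,β)` is its supremum. -/
def solSetAB (N : ℕ) (α β : ℝ) : Set ℝ :=
  {lam | 0 < lam ∧ ∃ u, IsClassicalSolutionAB N lam α β u}

/-!
Positivity of the clamped plate operator on the ball (Boggio) gives a comparison principle, hence,
by duality in `L²` and the solvability of the clamped problem for polynomial data, a solution of
`Δ²v = f ≥ 0` squeezed between `0` and any square-integrable super-solution. Starting from `Φ`, the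
iteration `Δ²uₙ₊₁ = λ(1 - uₙ)⁻²` therefore increases and stays below `U`, and its limit is a weak
solution by dominated convergence.

Since the data only say `U ≤ 1`, the monotonicity of `t ↦ (1 - t)⁻²` is lost on `{U = 1}`, where the
convention `0⁻¹ = 0` applies, and this set must first be shown to be null. The function `z = 1 - U`
is nonnegative with `Δ²z ≤ 0` weakly; a suitably weighted mean of `z` over balls is then concave in
the squared radius, which yields a Harnack-type inequality and the dichotomy `z ≠ 0` almost
everywhere or `z = 0` almost everywhere. The second case is excluded by the test function
`(1 - |x|²)³`.
-/

local notation:max "ℝ^" n:max => EuclideanSpace ℝ (Fin n)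

/-! ### Partial derivatives and the Laplacian -/

section PartialDerivatives

variable {N : ℕ} {O : Set ℝ^N} {f g : ℝ^N → ℝ} {x : ℝ^N} {n m : WithTop ℕ∞}

/-- The partial derivative `∂ᵢf`; `lap f` is by definition the sum of the `∂ᵢ(∂ᵢf)`. -/
noncomputable def pderiv (i : Fin N) (f : ℝ^N → ℝ) (x : ℝ^N) : ℝ :=
  fderiv ℝ f x (EuclideanSpace.single i 1)

lemma lap_apply (f : ℝ^N → ℝ) (x : ℝ^N) : lap f x = ∑ i, pderiv i (pderiv i f) x := rfl

lemma pderiv_congr (hO : IsOpen O) (h : EqOn f g O) (i : Fin N) :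
    EqOn (pderiv i f) (pderiv i g) O := fun x hx => by
  rw [pderiv, pderiv, (h.eventuallyEq_of_mem (hO.mem_nhds hx)).fderiv_eq]

lemma lap_congr (hO : IsOpen O) (h : EqOn f g O) : EqOn (lap f) (lap g) O := fun _ hx =>
  Finset.sum_congr rfl fun i _ => pderiv_congr hO (pderiv_congr hO h i) i hx

lemma pderiv_contDiffOn (hO : IsOpen O) (hf : ContDiffOn ℝ m f O) (hn : n + 1 ≤ m) (i : Fin N) :
    ContDiffOn ℝ n (pderiv i f) O :=
  (hf.fderiv_of_isOpen hO hn).clm_apply contDiffOn_const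

lemma lap_contDiffOn (hO : IsOpen O) (hf : ContDiffOn ℝ m f O) (hn : n + 1 + 1 ≤ m) :
    ContDiffOn ℝ n (lap f) O :=
  ContDiffOn.sum fun i _ => pderiv_contDiffOn hO (pderiv_contDiffOn hO hf hn i) le_rfl i

lemma differentiableAt_of_contDiffOn (hO : IsOpen O) (hf : ContDiffOn ℝ m f O) (hm : m ≠ 0)
    (hx : x ∈ O) : DifferentiableAt ℝ f x :=
  (hf.differentiableOn hm).differentiableAt (hO.mem_nhds hx)

lemma differentiableAt_pderiv (hO : IsOpen O) (hf : ContDiffOn ℝ 2 f O) (hx : x ∈ O) (i : Fin N) :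
    DifferentiableAt ℝ (pderiv i f) x :=
  differentiableAt_of_contDiffOn hO (pderiv_contDiffOn hO hf (n := 1) (by norm_num) i)
    one_ne_zero hx

lemma pderiv_add (hf : DifferentiableAt ℝ f x) (hg : DifferentiableAt ℝ g x) (i : Fin N) :
    pderiv i (fun y => f y + g y) x = pderiv i f x + pderiv i g x := by
  unfold pderiv; rw [fderiv_fun_add hf hg]; rfl

lemma pderiv_const_mul (c : ℝ) (hf : DifferentiableAt ℝ f x) (i : Fin N) :
    pderiv i (fun y => c * f y) x = c * pderiv i f x := by
  unfold pderiv; rw [fderiv_const_mul hf]; rfl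

lemma pderiv_mul (hf : DifferentiableAt ℝ f x) (hg : DifferentiableAt ℝ g x) (i : Fin N) :
    pderiv i (fun y => f y * g y) x = f x * pderiv i g x + g x * pderiv i f x := by
  unfold pderiv; rw [fderiv_fun_mul hf hg]; rfl

lemma pderiv_const (c : ℝ) (i : Fin N) (x : ℝ^N) : pderiv i (fun _ => c) x = 0 := by
  simp [pderiv]

lemma pderiv_sum {ι : Type*} {s : Finset ι} {F : ι → ℝ^N → ℝ}
    (h : ∀ j ∈ s, DifferentiableAt ℝ (F j) x) (i : Fin N) :
    pderiv i (fun y => ∑ j ∈ s, F j y) x = ∑ j ∈ s, pderiv i (F j) x := by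
  unfold pderiv; rw [fderiv_fun_sum h]; simp

lemma coord_contDiff (i : Fin N) : ContDiff ℝ n (fun y : ℝ^N => y i) :=
  (EuclideanSpace.proj (𝕜 := ℝ) i).contDiff

lemma pderiv_coord (i j : Fin N) (x : ℝ^N) :
    pderiv i (fun y => y j) x = if j = i then 1 else 0 := by
  have hproj : (fun y : ℝ^N => y j) = EuclideanSpace.proj (𝕜 := ℝ) j := rfl
  rw [pderiv, hproj, ContinuousLinearMap.fderiv]
  simp

lemma lap_coord (j : Fin N) (x : ℝ^N) : lap (fun y => y j) x = 0 := by
  rw [lap_apply]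
  refine Finset.sum_eq_zero fun i _ => ?_
  have : pderiv i (fun y : ℝ^N => y j) = fun _ => if j = i then 1 else 0 :=
    funext fun y => pderiv_coord i j y
  rw [this, pderiv_const]

lemma pderiv_comm (hO : IsOpen O) (hf : ContDiffOn ℝ 2 f O) (i j : Fin N) :
    EqOn (pderiv i (pderiv j f)) (pderiv j (pderiv i f)) O := by
  intro x hx
  have hfx : ContDiffAt ℝ 2 f x := hf.contDiffAt (hO.mem_nhds hx)
  have hd : DifferentiableAt ℝ (fderiv ℝ f) x :=
    (hfx.fderiv_right (m := 1) (by norm_num)).differentiableAt (by norm_num)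
  have hsecond : ∀ k l : Fin N, pderiv k (pderiv l f) x =
      fderiv ℝ (fderiv ℝ f) x (EuclideanSpace.single k 1) (EuclideanSpace.single l 1) := by
    intro k l
    have : pderiv l f = fun y => fderiv ℝ f y (EuclideanSpace.single l 1) := rfl
    rw [this, pderiv, fderiv_clm_apply hd (by fun_prop)]
    simp
  rw [hsecond, hsecond]
  exact hfx.isSymmSndFDerivAt (by simp) _ _

lemma lap_add (hO : IsOpen O) (hf : ContDiffOn ℝ 2 f O) (hg : ContDiffOn ℝ 2 g O) :
    EqOn (lap (fun y => f y + g y)) (fun x => lap f x + lap g x) O := by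
  intro x hx
  simp only [lap_apply, ← Finset.sum_add_distrib]
  refine Finset.sum_congr rfl fun i _ => ?_
  have hfirst : EqOn (pderiv i fun y => f y + g y) (fun y => pderiv i f y + pderiv i g y) O :=
    fun y hy => pderiv_add (differentiableAt_of_contDiffOn hO hf two_ne_zero hy)
      (differentiableAt_of_contDiffOn hO hg two_ne_zero hy) i
  rw [pderiv_congr hO hfirst i hx]
  exact pderiv_add (differentiableAt_pderiv hO hf hx i) (differentiableAt_pderiv hO hg hx i) i

lemma lap_const_mul (hO : IsOpen O) (c : ℝ) (hf : ContDiffOn ℝ 2 f O) :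
    EqOn (lap (fun y => c * f y)) (fun x => c * lap f x) O := by
  intro x hx
  simp only [lap_apply, Finset.mul_sum]
  refine Finset.sum_congr rfl fun i _ => ?_
  have hfirst : EqOn (pderiv i fun y => c * f y) (fun y => c * pderiv i f y) O := fun y hy =>
    pderiv_const_mul c (differentiableAt_of_contDiffOn hO hf two_ne_zero hy) i
  rw [pderiv_congr hO hfirst i hx]
  exact pderiv_const_mul c (differentiableAt_pderiv hO hf hx i) i

lemma lap_mul (hO : IsOpen O) (hf : ContDiffOn ℝ 2 f O) (hg : ContDiffOn ℝ 2 g O) :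
    EqOn (lap (fun y => f y * g y))
      (fun x => f x * lap g x + 2 * (∑ i, pderiv i f x * pderiv i g x) + g x * lap f x) O := by
  intro x hx
  simp only [lap_apply, Finset.mul_sum, ← Finset.sum_add_distrib]
  refine Finset.sum_congr rfl fun i _ => ?_
  have df : ∀ y ∈ O, DifferentiableAt ℝ f y := fun y hy =>
    differentiableAt_of_contDiffOn hO hf two_ne_zero hy
  have dg : ∀ y ∈ O, DifferentiableAt ℝ g y := fun y hy =>
    differentiableAt_of_contDiffOn hO hg two_ne_zero hy
  have df' := differentiableAt_pderiv hO hf hx i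
  have dg' := differentiableAt_pderiv hO hg hx i
  have hfirst : EqOn (pderiv i fun y => f y * g y)
      (fun y => f y * pderiv i g y + g y * pderiv i f y) O :=
    fun y hy => pderiv_mul (df y hy) (dg y hy) i
  rw [pderiv_congr hO hfirst i hx, pderiv_add ((df x hx).fun_mul dg') ((dg x hx).fun_mul df') i,
    pderiv_mul (df x hx) dg' i, pderiv_mul (dg x hx) df' i]
  ring

lemma lap_sum {ι : Type*} (s : Finset ι) (hO : IsOpen O) {F : ι → ℝ^N → ℝ}
    (h : ∀ j ∈ s, ContDiffOn ℝ 2 (F j) O) :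
    EqOn (lap (fun y => ∑ j ∈ s, F j y)) (fun x => ∑ j ∈ s, lap (F j) x) O := by
  intro x hx
  simp only [lap_apply]
  rw [Finset.sum_comm]
  refine Finset.sum_congr rfl fun i _ => ?_
  have hfirst : EqOn (pderiv i fun y => ∑ j ∈ s, F j y) (fun y => ∑ j ∈ s, pderiv i (F j) y) O :=
    fun y hy => pderiv_sum
      (fun j hj => differentiableAt_of_contDiffOn hO (h j hj) two_ne_zero hy) i
  rw [pderiv_congr hO hfirst i hx]
  exact pderiv_sum (fun j hj => differentiableAt_pderiv hO (h j hj) hx i) i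

lemma lap_pderiv (hO : IsOpen O) (hf : ContDiffOn ℝ 3 f O) (j : Fin N) :
    EqOn (lap (pderiv j f)) (pderiv j (lap f)) O := by
  intro x hx
  have hp : ∀ i, ContDiffOn ℝ 2 (pderiv i f) O := fun i =>
    pderiv_contDiffOn hO hf (by norm_num) i
  have hcomm : pderiv j (lap f) x = ∑ i, pderiv j (pderiv i (pderiv i f)) x :=
    pderiv_sum (F := fun i => pderiv i (pderiv i f))
      (fun i _ => differentiableAt_pderiv hO (hp i) hx i) j
  rw [hcomm, lap_apply]
  refine Finset.sum_congr rfl fun i _ => ?_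
  rw [pderiv_congr hO (pderiv_comm hO (hf.of_le (by norm_num)) i j) i hx]
  exact pderiv_comm hO (hp i) i j hx

end PartialDerivatives

/-! ### The defining function of the ball and Boggio's operator -/

section BoggioOperator

variable {N : ℕ} {O : Set ℝ^N} {f g : ℝ^N → ℝ} {n m : WithTop ℕ∞}

/-- The defining function `ρ(x) = 1 - |x|²` of the unit ball. -/
noncomputable def rho (x : ℝ^N) : ℝ := 1 - ‖x‖ ^ 2

lemma rho_contDiff : ContDiff ℝ n (rho : ℝ^N → ℝ) := contDiff_const.sub (contDiff_norm_sq ℝ)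

lemma rho_continuous : Continuous (rho : ℝ^N → ℝ) := (rho_contDiff (n := 0)).continuous

lemma rho_pos {x : ℝ^N} (hx : x ∈ ball (0 : ℝ^N) 1) : 0 < rho x := by
  have : ‖x‖ < 1 := by simpa using hx
  unfold rho; nlinarith [norm_nonneg x]

lemma rho_eq_sum (x : ℝ^N) : rho x = 1 - ∑ i, x i ^ 2 := by
  unfold rho; rw [EuclideanSpace.real_norm_sq_eq]

lemma pderiv_rho (i : Fin N) (x : ℝ^N) : pderiv i rho x = -2 * x i := by
  unfold pderiv rho
  rw [fderiv_const_sub, fderiv_norm_sq_apply]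
  simp [EuclideanSpace.inner_single_right]

lemma lap_rho (x : ℝ^N) : lap rho x = -2 * N := by
  have h : ∀ i : Fin N, pderiv i (pderiv i rho) x = -2 := by
    intro i
    have : pderiv i (rho : ℝ^N → ℝ) = fun y => -2 * y i := funext (pderiv_rho i)
    rw [this, pderiv_const_mul _ (by fun_prop), pderiv_coord]; simp
  simp [lap_apply, h, mul_comm]

/-- The Euler operator `x·∇`. -/
noncomputable def euler (f : ℝ^N → ℝ) (x : ℝ^N) : ℝ := ∑ i, x i * pderiv i f x

lemma euler_contDiffOn (hO : IsOpen O) (hf : ContDiffOn ℝ m f O) (hn : n + 1 ≤ m) :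
    ContDiffOn ℝ n (euler f) O :=
  ContDiffOn.sum fun i _ => (coord_contDiff i).contDiffOn.mul (pderiv_contDiffOn hO hf hn i)

lemma lap_euler (hO : IsOpen O) (hf : ContDiffOn ℝ 3 f O) :
    EqOn (lap (euler f)) (fun x => euler (lap f) x + 2 * lap f x) O := by
  intro x hx
  have hp : ∀ i, ContDiffOn ℝ 2 (pderiv i f) O := fun i =>
    pderiv_contDiffOn hO hf (by norm_num) i
  have hsum : euler f = fun y => ∑ j, y j * pderiv j f y := rfl
  rw [hsum, lap_sum Finset.univ hO (fun j _ => (coord_contDiff j).contDiffOn.mul (hp j)) hx]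
  simp only [euler]
  rw [lap_apply f, Finset.mul_sum, ← Finset.sum_add_distrib]
  refine Finset.sum_congr rfl fun j _ => ?_
  rw [lap_mul hO (coord_contDiff j).contDiffOn (hp j) hx]
  simp only [lap_coord, pderiv_coord, lap_pderiv hO hf j hx]
  simp

/-- Boggio's operator `Vf = ρΔf + 4x·∇f + (2N - 8)f`. Its coefficients are chosen so that
`Δ(Vf) = ρΔ²f`, which turns the clamped problem into two second-order ones. -/
noncomputable def boggioOp (f : ℝ^N → ℝ) (x : ℝ^N) : ℝ :=
  rho x * lap f x + 4 * euler f x + (2 * N - 8) * f x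

lemma boggioOp_congr (hO : IsOpen O) (h : EqOn f g O) : EqOn (boggioOp f) (boggioOp g) O := by
  intro x hx
  simp only [boggioOp, euler, lap_congr hO h hx, h hx, fun i => pderiv_congr hO h i hx]

lemma boggioOp_contDiffOn (hO : IsOpen O) (hf : ContDiffOn ℝ 4 f O) :
    ContDiffOn ℝ 2 (boggioOp f) O :=
  ((rho_contDiff.contDiffOn.mul (lap_contDiffOn hO hf (by norm_num))).add
    (contDiffOn_const.mul (euler_contDiffOn hO hf (by norm_num)))).add
    (contDiffOn_const.mul (hf.of_le (by norm_num)))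

lemma lap_boggioOp (hO : IsOpen O) (hf : ContDiffOn ℝ 4 f O) :
    EqOn (lap (boggioOp f)) (fun x => rho x * biharm f x) O := by
  intro x hx
  have hf2 : ContDiffOn ℝ 2 f O := hf.of_le (by norm_num)
  have hl : ContDiffOn ℝ 2 (lap f) O := lap_contDiffOn hO hf (by norm_num)
  have he : ContDiffOn ℝ 2 (euler f) O := euler_contDiffOn hO hf (by norm_num)
  have hr : ContDiffOn ℝ 2 (rho : ℝ^N → ℝ) O := rho_contDiff.contDiffOn
  have hdef : boggioOp f = fun y => (rho y * lap f y + 4 * euler f y) + (2 * N - 8) * f y := rfl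
  have hcross : ∑ i, -2 * x i * pderiv i (lap f) x = -2 * euler (lap f) x := by
    rw [euler, Finset.mul_sum]; exact Finset.sum_congr rfl fun i _ => by ring
  rw [hdef, lap_add hO ((hr.mul hl).add (contDiffOn_const.mul he)) (contDiffOn_const.mul hf2) hx]
  simp only [lap_add hO (hr.mul hl) (contDiffOn_const.mul he) hx, lap_const_mul hO _ hf2 hx,
    lap_const_mul hO _ he hx, lap_mul hO hr hl hx, lap_euler hO (hf.of_le (by norm_num)) hx,
    lap_rho, pderiv_rho, hcross, biharm]
  ring

lemma euler_rho_mul (hO : IsOpen O) (hg : ContDiffOn ℝ 2 g O) :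
    EqOn (euler (fun y => rho y * g y)) (fun x => rho x * euler g x - 2 * ‖x‖ ^ 2 * g x) O := by
  intro x hx
  simp only [euler]
  rw [EuclideanSpace.real_norm_sq_eq, Finset.mul_sum, Finset.mul_sum, Finset.sum_mul,
    ← Finset.sum_sub_distrib]
  refine Finset.sum_congr rfl fun i _ => ?_
  rw [pderiv_mul (rho_contDiff.differentiable one_ne_zero x)
    (differentiableAt_of_contDiffOn hO hg two_ne_zero hx), pderiv_rho]
  ring

lemma lap_rho_mul (hO : IsOpen O) (hg : ContDiffOn ℝ 2 g O) :
    EqOn (lap (fun y => rho y * g y))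
      (fun x => rho x * lap g x - 4 * euler g x - 2 * N * g x) O := by
  intro x hx
  have hcross : ∑ i, -2 * x i * pderiv i g x = -2 * euler g x := by
    rw [euler, Finset.mul_sum]; exact Finset.sum_congr rfl fun i _ => by ring
  simp only [lap_mul hO rho_contDiff.contDiffOn hg hx, lap_rho, pderiv_rho, hcross]
  ring

lemma boggioOp_rho_mul (hO : IsOpen O) (hg : ContDiffOn ℝ 2 g O) :
    EqOn (boggioOp (fun y => rho y * g y)) (fun x => rho x ^ 2 * lap g x - 8 * g x) O := by
  intro x hx
  have hnorm : ‖x‖ ^ 2 = 1 - rho x := by unfold rho; ring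
  simp only [boggioOp, lap_rho_mul hO hg hx, euler_rho_mul hO hg hx, hnorm]
  ring

end BoggioOperator

/-! ### Minimum principles on the unit ball -/

section MinimumPrinciple

variable {N : ℕ} {O : Set ℝ^N} {f g : ℝ^N → ℝ} {x : ℝ^N}

lemma deriv_deriv_nonneg_of_isLocalMin {h : ℝ → ℝ} {t : ℝ} (hc : ContinuousAt h t)
    (hmin : IsLocalMin h t) : 0 ≤ deriv (deriv h) t := by
  by_contra! hneg
  have hmax := isLocalMax_of_deriv_deriv_neg hneg hmin.deriv_eq_zero hc
  have hconst : h =ᶠ[nhds t] fun _ => h t := by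
    filter_upwards [hmin, hmax] with s h₁ h₂ using le_antisymm h₂ h₁
  have : deriv (deriv h) t = 0 := by
    rw [(hconst.deriv.trans (by simp : deriv (fun _ => h t) =ᶠ[nhds t] fun _ => 0)).deriv_eq]
    simp
  exact hneg.ne this

lemma pderiv_pderiv_nonneg_of_isLocalMin (hO : IsOpen O) (hf : ContDiffOn ℝ 2 f O) (hx : x ∈ O)
    (hmin : IsLocalMin f x) (i : Fin N) : 0 ≤ pderiv i (pderiv i f) x := by
  let l : ℝ → ℝ^N := fun t => x + t • EuclideanSpace.single i 1
  have hl0 : l 0 = x := by simp [l]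
  have hl : ∀ t, HasDerivAt l (EuclideanSpace.single i 1) t := fun t => by
    simpa [l] using ((hasDerivAt_id t).smul_const (EuclideanSpace.single i (1 : ℝ))).const_add x
  have hlc : Continuous l := by fun_prop
  have hcomp : ∀ (g : ℝ^N → ℝ) t, DifferentiableAt ℝ g (l t) →
      deriv (g ∘ l) t = pderiv i g (l t) := fun g t hg =>
    (hg.hasFDerivAt.comp_hasDerivAt t (hl t)).deriv
  have hfirst : deriv (f ∘ l) =ᶠ[nhds 0] pderiv i f ∘ l := by
    filter_upwards [hlc.continuousAt.eventually_mem (by rw [hl0]; exact hO.mem_nhds hx)] with t ht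
      using hcomp f t (differentiableAt_of_contDiffOn hO hf two_ne_zero ht)
  have hsecond : deriv (deriv (f ∘ l)) 0 = pderiv i (pderiv i f) x := by
    rw [hfirst.deriv_eq, hcomp _ _ (by rw [hl0]; exact differentiableAt_pderiv hO hf hx i), hl0]
  rw [← hsecond]
  refine deriv_deriv_nonneg_of_isLocalMin (ContinuousAt.comp ?_ hlc.continuousAt)
    ((hl0.symm ▸ hmin : IsLocalMin f (l 0)).comp_continuous hlc.continuousAt)
  rw [hl0]
  exact (differentiableAt_of_contDiffOn hO hf two_ne_zero hx).continuousAt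

lemma lap_nonneg_of_isLocalMin (hO : IsOpen O) (hf : ContDiffOn ℝ 2 f O) (hx : x ∈ O)
    (hmin : IsLocalMin f x) : 0 ≤ lap f x :=
  Finset.sum_nonneg fun i _ => pderiv_pderiv_nonneg_of_isLocalMin hO hf hx hmin i

/-- The filter of approach to the unit sphere from inside the unit ball. -/
noncomputable def nearSphere (N : ℕ) : Filter ℝ^N := comap norm (nhdsWithin 1 (Iio 1))

lemma eventually_nearSphere {p : ℝ^N → Prop} :
    (∀ᶠ x in nearSphere N, p x) ↔ ∃ r < 1, ∀ x, r < ‖x‖ → ‖x‖ < 1 → p x := by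
  rw [nearSphere, ((nhdsLT_basis (1 : ℝ)).comap (norm : ℝ^N → ℝ)).eventually_iff]
  simp [and_imp]

lemma eventually_mem_ball_nearSphere : ∀ᶠ x in nearSphere N, x ∈ ball (0 : ℝ^N) 1 :=
  eventually_nearSphere.2 ⟨0, one_pos, fun _ _ hx => mem_ball_zero_iff.2 hx⟩

lemma exists_isLocalMin_of_neg (hc : ContinuousOn f (ball 0 1))
    (hb : ∀ ε > 0, ∀ᶠ x in nearSphere N, -ε ≤ f x) (hx : x ∈ ball (0 : ℝ^N) 1) (hneg : f x < 0) :
    ∃ y ∈ ball (0 : ℝ^N) 1, IsLocalMin f y ∧ f y < 0 := by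
  obtain ⟨r, hr, hrb⟩ := eventually_nearSphere.1 (hb (-f x / 2) (by linarith))
  set R := max r ‖x‖
  have hR : R < 1 := max_lt hr (by simpa using hx)
  have hsub : closedBall (0 : ℝ^N) R ⊆ ball 0 1 := closedBall_subset_ball hR
  obtain ⟨y, hy, hm⟩ := (isCompact_closedBall (0 : ℝ^N) R).exists_isMinOn
    ⟨x, by simp [R]⟩ (hc.mono hsub)
  have hyx : f y ≤ f x := hm (by simp [R])
  refine ⟨y, hsub hy, ?_, by linarith⟩
  filter_upwards [isOpen_ball.mem_nhds (hsub hy)] with w hw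
  by_cases hwR : w ∈ closedBall (0 : ℝ^N) R
  · exact hm hwR
  · have hRw : R < ‖w‖ := by simpa using hwR
    have := hrb w ((le_max_left _ _).trans_lt hRw) (by simpa using hw)
    linarith

lemma nonneg_of_mul_lap_le (hf : ContDiffOn ℝ 2 f (ball 0 1)) {w c : ℝ^N → ℝ}
    (hw : ∀ x ∈ ball (0 : ℝ^N) 1, 0 ≤ w x) (hcpos : ∀ x ∈ ball (0 : ℝ^N) 1, 0 < c x)
    (hl : ∀ x ∈ ball (0 : ℝ^N) 1, w x * lap f x ≤ c x * f x)
    (hb : ∀ ε > 0, ∀ᶠ x in nearSphere N, -ε ≤ f x) (hx : x ∈ ball (0 : ℝ^N) 1) : 0 ≤ f x := by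
  by_contra! hneg
  obtain ⟨y, hy, hm, hfy⟩ := exists_isLocalMin_of_neg hf.continuousOn hb hx hneg
  have := mul_nonneg (hw y hy) (lap_nonneg_of_isLocalMin isOpen_ball hf hy hm)
  nlinarith [hl y hy, mul_pos_of_neg_of_neg hfy (neg_neg_of_pos (hcpos y hy))]

lemma nonneg_of_lap_nonpos (hN : 0 < N) (hf : ContDiffOn ℝ 2 f (ball 0 1))
    (hl : ∀ x ∈ ball (0 : ℝ^N) 1, lap f x ≤ 0)
    (hb : ∀ ε > 0, ∀ᶠ x in nearSphere N, -ε ≤ f x) (hx : x ∈ ball (0 : ℝ^N) 1) : 0 ≤ f x := by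
  by_contra! hneg
  -- Perturbing by a multiple of `ρ` makes the Laplacian strictly negative.
  set δ := -f x / 2 with hδ
  have hδ0 : 0 < δ := by linarith
  have hδρ : ContDiffOn ℝ 2 (fun y : ℝ^N => δ * rho y) (ball 0 1) :=
    contDiffOn_const.mul rho_contDiff.contDiffOn
  have hneg' : f x + δ * rho x < 0 := by
    have : rho x ≤ 1 := by unfold rho; nlinarith [norm_nonneg x]
    nlinarith
  obtain ⟨y, hy, hm, -⟩ := exists_isLocalMin_of_neg (f := fun y => f y + δ * rho y)
    (hf.add hδρ).continuousOn (fun ε hε => by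
      filter_upwards [hb ε hε, eventually_mem_ball_nearSphere] with y hfy hy
      nlinarith [rho_pos hy]) hx hneg'
  have hlap := lap_nonneg_of_isLocalMin isOpen_ball (hf.add hδρ) hy hm
  simp only [lap_add isOpen_ball hf hδρ hy,
    lap_const_mul isOpen_ball δ rho_contDiff.contDiffOn hy, lap_rho] at hlap
  have hN' : (0 : ℝ) < N := by exact_mod_cast hN
  nlinarith [mul_pos hδ0 hN', hl y hy]

end MinimumPrinciple

/-! ### Boundary behaviour of test functions -/

section TestFunctions

variable {N : ℕ} {f g φ : ℝ^N → ℝ} {n m : WithTop ℕ∞}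

/-- The partial derivative relative to the closed unit ball, continuous up to the sphere. -/
noncomputable def pderivW (i : Fin N) (f : ℝ^N → ℝ) (x : ℝ^N) : ℝ :=
  fderivWithin ℝ f (closedBall 0 1) x (EuclideanSpace.single i 1)

/-- The Laplacian relative to the closed unit ball, continuous up to the sphere. -/
noncomputable def lapW (f : ℝ^N → ℝ) (x : ℝ^N) : ℝ := ∑ i, pderivW i (pderivW i f) x

lemma uniqueDiffOn_closedBall : UniqueDiffOn ℝ (closedBall (0 : ℝ^N) 1) :=
  uniqueDiffOn_convex (convex_closedBall _ _) (by
    rw [interior_closedBall _ one_ne_zero]; exact ⟨0, by simp⟩)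

lemma pderivW_contDiffOn (hf : ContDiffOn ℝ m f (closedBall 0 1)) (hn : n + 1 ≤ m) (i : Fin N) :
    ContDiffOn ℝ n (pderivW i f) (closedBall 0 1) :=
  (hf.fderivWithin uniqueDiffOn_closedBall hn).clm_apply contDiffOn_const

lemma lapW_contDiffOn (hf : ContDiffOn ℝ m f (closedBall 0 1)) (hn : n + 1 + 1 ≤ m) :
    ContDiffOn ℝ n (lapW f) (closedBall 0 1) :=
  ContDiffOn.sum fun i _ => pderivW_contDiffOn (pderivW_contDiffOn hf hn i) le_rfl i

lemma pderivW_eqOn (i : Fin N) (f : ℝ^N → ℝ) : EqOn (pderivW i f) (pderiv i f) (ball 0 1) := by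
  intro x hx
  rw [pderivW, pderiv,
    fderivWithin_of_mem_nhds (mem_of_superset (isOpen_ball.mem_nhds hx) ball_subset_closedBall)]

lemma lapW_eqOn (f : ℝ^N → ℝ) : EqOn (lapW f) (lap f) (ball 0 1) := by
  intro x hx
  refine Finset.sum_congr rfl fun i _ => ?_
  rw [pderivW_eqOn i _ hx]
  exact pderiv_congr isOpen_ball (pderivW_eqOn i f) i hx

lemma lapW_lapW_eqOn (f : ℝ^N → ℝ) : EqOn (lapW (lapW f)) (biharm f) (ball 0 1) :=
  (lapW_eqOn _).trans (lap_congr isOpen_ball (lapW_eqOn f))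

lemma tendsto_nearSphere_zero (hg : ContinuousOn g (closedBall 0 1))
    (h0 : ∀ x, ‖x‖ = 1 → g x = 0) : Tendsto g (nearSphere N) (nhds 0) := by
  have hclosed : IsClosedMap (norm : ℝ^N → ℝ) := by
    refine (isProperMap_iff_tendsto_cocompact.2 ⟨continuous_norm, ?_⟩).isClosedMap
    exact (tendsto_norm_cocompact_atTop).mono_right atTop_le_cocompact
  refine tendsto_def.2 fun s hs => ?_
  have hfiber : ∀ x ∈ (norm : ℝ^N → ℝ) ⁻¹' {1},
      ∀ᶠ y in nhds x, y ∈ closedBall 0 1 → y ∈ g ⁻¹' s := by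
    intro x hx
    have hxs : ‖x‖ = 1 := hx
    exact eventually_nhdsWithin_iff.1 (hg x (by simp [hxs]) (by rwa [h0 x hxs]))
  have h := (hclosed.eventually_nhds_fiber 1 hfiber).filter_mono
    (nhdsWithin_le_nhds (s := Iio (1 : ℝ)))
  filter_upwards [tendsto_comap.eventually h, eventually_mem_ball_nearSphere] with x hx hxb
  exact hx x rfl (ball_subset_closedBall hxb)

lemma IsTest.tendsto_boggioOp (hφ : IsTest N φ) :
    Tendsto (boggioOp φ) (nearSphere N) (nhds 0) := by
  obtain ⟨hc, h0, h1⟩ := hφ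
  have hcont : ContinuousOn (fun x => rho x * lapW φ x + 4 * (∑ i, x i * pderivW i φ x)
      + (2 * N - 8) * φ x) (closedBall (0 : ℝ^N) 1) := by
    have hl := (lapW_contDiffOn hc (n := 2) (by norm_num)).continuousOn
    have hp : ∀ i, ContinuousOn (pderivW i φ) (closedBall 0 1) := fun i =>
      (pderivW_contDiffOn hc (n := 3) (by norm_num) i).continuousOn
    have hφ := hc.continuousOn
    have hr := (rho_continuous (N := N)).continuousOn (s := closedBall 0 1)
    fun_prop
  refine (tendsto_nearSphere_zero hcont fun x hx => ?_).congr' ?_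
  · simp [pderivW, h1 x hx, h0 x hx, rho, hx]
  · filter_upwards [eventually_mem_ball_nearSphere] with x hx
    simp only [lapW_eqOn φ hx, fun i => pderivW_eqOn i φ hx]
    rfl

/-- Integrating the gradient bound radially up to the sphere. -/
lemma abs_le_of_norm_fderivWithin_le (hd : DifferentiableOn ℝ φ (closedBall 0 1))
    (h0 : ∀ x, ‖x‖ = 1 → φ x = 0) {r ε : ℝ} (hr : 0 ≤ r)
    (hbound : ∀ x ∈ closedBall (0 : ℝ^N) 1, r < ‖x‖ → ‖fderivWithin ℝ φ (closedBall 0 1) x‖ ≤ ε)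
    {x : ℝ^N} (hx : ‖x‖ ≤ 1) (hrx : r < ‖x‖) : |φ x| ≤ ε * (1 - ‖x‖) := by
  have hx0 : 0 < ‖x‖ := hr.trans_lt hrx
  set y := ‖x‖⁻¹ • x with hy
  have hyn : ‖y‖ = 1 := by rw [hy, norm_smul, norm_inv, norm_norm, inv_mul_cancel₀ hx0.ne']
  have hseg : ∀ w ∈ segment ℝ x y, w ∈ closedBall (0 : ℝ^N) 1 ∧ r < ‖w‖ := by
    rintro w ⟨a, b, ha, hb, hab, rfl⟩
    have hw : a • x + b • y = (a + b * ‖x‖⁻¹) • x := by rw [hy, add_smul, mul_smul]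
    have hnorm : ‖a • x + b • y‖ = a * ‖x‖ + b := by
      rw [hw, norm_smul, Real.norm_of_nonneg (by positivity)]; field_simp
    rw [mem_closedBall_zero_iff, hnorm]
    constructor <;> nlinarith
  have hmv := (convex_segment x y).norm_image_sub_le_of_norm_hasFDerivWithin_le (C := ε)
    (fun w hw => (hd w (hseg w hw).1).hasFDerivWithinAt.mono fun z hz => (hseg z hz).1)
    (fun w hw => hbound w (hseg w hw).1 (hseg w hw).2)
    (right_mem_segment ℝ x y) (left_mem_segment ℝ x y)
  have hxy : ‖x - y‖ = 1 - ‖x‖ := by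
    have hsmul : x - y = (1 - ‖x‖⁻¹) • x := by rw [sub_smul, one_smul]
    have hle : 1 - ‖x‖⁻¹ ≤ 0 := by linarith [(one_le_inv₀ hx0).2 hx]
    rw [hsmul, norm_smul, Real.norm_of_nonpos hle]; field_simp; ring
  rwa [h0 y hyn, sub_zero, Real.norm_eq_abs, hxy] at hmv

lemma IsTest.tendsto_div_rho (hφ : IsTest N φ) :
    Tendsto (fun x => φ x / rho x) (nearSphere N) (nhds 0) := by
  obtain ⟨hc, h0, h1⟩ := hφ
  have hD : Tendsto (fun x => ‖fderivWithin ℝ φ (closedBall 0 1) x‖) (nearSphere N) (nhds 0) :=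
    tendsto_nearSphere_zero
      (hc.continuousOn_fderivWithin uniqueDiffOn_closedBall (by norm_num)).norm
      fun x hx => by rw [h1 x hx, norm_zero]
  refine Metric.tendsto_nhds.2 fun ε hε => ?_
  obtain ⟨r, hr, h⟩ := eventually_nearSphere.1 (hD.eventually (gt_mem_nhds (half_pos hε)))
  refine eventually_nearSphere.2 ⟨max r 0, max_lt hr one_pos, fun x hrx hx => ?_⟩
  have hρ := rho_pos (mem_ball_zero_iff.2 hx)
  have hgrad := abs_le_of_norm_fderivWithin_le (hc.differentiableOn (by norm_num)) h0
    (le_max_right r 0) (ε := ε / 2) (fun w hw hrw => ?_) hx.le hrx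
  · rw [dist_zero_right, Real.norm_eq_abs, abs_div, abs_of_pos hρ, div_lt_iff₀ hρ]
    have : 1 - ‖x‖ ≤ rho x := by unfold rho; nlinarith [norm_nonneg x]
    nlinarith
  · rcases (mem_closedBall_zero_iff.1 hw).lt_or_eq with hlt | heq
    · exact (h w ((le_max_left r 0).trans_lt hrw) hlt).le
    · rw [h1 w heq, norm_zero]; positivity

end TestFunctions

/-! ### Positivity preservation for the clamped problem -/

section Boggio

variable {N : ℕ} {φ : ℝ^N → ℝ}

lemma IsTest.contDiffOn_ball (hφ : IsTest N φ) : ContDiffOn ℝ 4 φ (ball 0 1) :=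
  hφ.1.mono ball_subset_closedBall

lemma IsTest.boggioOp_nonpos (hN : 0 < N) (hφ : IsTest N φ)
    (h : ∀ x ∈ ball (0 : ℝ^N) 1, 0 ≤ biharm φ x) {x : ℝ^N} (hx : x ∈ ball (0 : ℝ^N) 1) :
    boggioOp φ x ≤ 0 := by
  have hV := boggioOp_contDiffOn isOpen_ball hφ.contDiffOn_ball
  have : 0 ≤ (-1) * boggioOp φ x := by
    refine nonneg_of_lap_nonpos hN (f := fun x => (-1) * boggioOp φ x) (contDiffOn_const.mul hV)
      (fun y hy => ?_) (fun ε hε => ?_) hx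
    · simp only [lap_const_mul isOpen_ball _ hV hy, lap_boggioOp isOpen_ball hφ.contDiffOn_ball hy]
      linarith [mul_nonneg (rho_pos hy).le (h y hy)]
    · filter_upwards [hφ.tendsto_boggioOp.eventually (gt_mem_nhds hε)] with y hy
      linarith
  linarith

/-- Boggio's positivity principle. The quotient `ψ = φ/ρ` satisfies `ρ²Δψ - 8ψ = Vφ ≤ 0`. -/
theorem IsTest.nonneg_of_biharm_nonneg (hN : 0 < N) (hφ : IsTest N φ)
    (h : ∀ x ∈ ball (0 : ℝ^N) 1, 0 ≤ biharm φ x) :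
    ∀ x ∈ closedBall (0 : ℝ^N) 1, 0 ≤ φ x := by
  have hψ : ContDiffOn ℝ 2 (fun x => φ x / rho x) (ball (0 : ℝ^N) 1) :=
    (hφ.contDiffOn_ball.of_le (by norm_num)).div rho_contDiff.contDiffOn
      fun x hx => (rho_pos hx).ne'
  have hfactor : EqOn φ (fun y => rho y * (φ y / rho y)) (ball 0 1) := fun y hy =>
    (mul_div_cancel₀ _ (rho_pos hy).ne').symm
  have hineq : ∀ x ∈ ball (0 : ℝ^N) 1,
      rho x ^ 2 * lap (fun y => φ y / rho y) x ≤ 8 * (φ x / rho x) := fun x hx => by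
    have hV := hφ.boggioOp_nonpos hN h hx
    rw [boggioOp_congr isOpen_ball hfactor hx, boggioOp_rho_mul isOpen_ball hψ hx] at hV
    exact sub_nonpos.1 hV
  intro x hx
  rcases (mem_closedBall_zero_iff.1 hx).lt_or_eq with hlt | heq
  · have hxb : x ∈ ball (0 : ℝ^N) 1 := mem_ball_zero_iff.2 hlt
    have hpos : 0 ≤ φ x / rho x := nonneg_of_mul_lap_le hψ (fun y _ => sq_nonneg (rho y))
      (fun _ _ => by norm_num) hineq (fun ε hε => by
        filter_upwards [hφ.tendsto_div_rho.eventually (lt_mem_nhds (neg_lt_zero.2 hε))] with y hy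
          using hy.le) hxb
    rw [hfactor hxb]
    exact mul_nonneg (rho_pos hxb).le hpos
  · rw [hφ.2.1 x heq]

end Boggio

/-! ### Polynomial solutions of the clamped problem -/

section PolynomialFunctions

variable {N : ℕ} {n : WithTop ℕ∞}

/-- Polynomials as functions on Euclidean space. -/
noncomputable def evalPoly : MvPolynomial (Fin N) ℝ →ₐ[ℝ] (ℝ^N → ℝ) :=
  MvPolynomial.aeval fun i x => x i

lemma evalPoly_X (i : Fin N) : evalPoly (MvPolynomial.X i) = fun x => x i :=
  MvPolynomial.aeval_X _ i

lemma evalPoly_C (c : ℝ) : evalPoly (MvPolynomial.C c : MvPolynomial (Fin N) ℝ) = fun _ => c :=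
  MvPolynomial.aeval_C _ c

lemma evalPoly_one (x : ℝ^N) : evalPoly 1 x = 1 := by rw [map_one, Pi.one_apply]

lemma evalPoly_apply (p : MvPolynomial (Fin N) ℝ) (x : ℝ^N) :
    evalPoly p x = MvPolynomial.eval (fun i => x i) p := by
  induction p using MvPolynomial.induction_on with
  | C a => simp
  | add p q hp hq => simp [hp, hq]
  | mul_X p i hp => simp [hp, evalPoly_X]

lemma evalPoly_contDiff (p : MvPolynomial (Fin N) ℝ) : ContDiff ℝ n (evalPoly p) := by
  induction p using MvPolynomial.induction_on with
  | C a => rw [evalPoly_C]; exact contDiff_const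
  | add p q hp hq => rw [map_add]; exact hp.add hq
  | mul_X p i hp => rw [map_mul, evalPoly_X]; exact hp.mul (coord_contDiff i)

lemma evalPoly_continuousOn (p : MvPolynomial (Fin N) ℝ) {s : Set ℝ^N} :
    ContinuousOn (evalPoly p) s :=
  (evalPoly_contDiff p (n := 0)).continuous.continuousOn

lemma pderiv_evalPoly (i : Fin N) (p : MvPolynomial (Fin N) ℝ) :
    pderiv i (evalPoly p) = evalPoly (MvPolynomial.pderiv i p) := by
  have hd : ∀ p x, DifferentiableAt ℝ (evalPoly p : ℝ^N → ℝ) x := fun p x =>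
    (evalPoly_contDiff (n := 1) p).differentiable one_ne_zero x
  ext x
  induction p using MvPolynomial.induction_on with
  | C a => rw [evalPoly_C, pderiv_const, MvPolynomial.pderiv_C, map_zero, Pi.zero_apply]
  | add p q hp hq =>
    rw [map_add, map_add, map_add, Pi.add_apply, ← hp, ← hq]
    exact pderiv_add (hd p x) (hd q x) i
  | mul_X p j hp =>
    have hmul := pderiv_mul (hd p x) (hd (MvPolynomial.X j) x) i
    rw [hp, evalPoly_X, pderiv_coord] at hmul
    rw [map_mul, evalPoly_X]
    refine hmul.trans ?_
    by_cases hij : j = i <;> simp [MvPolynomial.pderiv_X, evalPoly_X, hij]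

lemma eq_zero_of_evalPoly_eq_zero {q : MvPolynomial (Fin N) ℝ}
    (h : ∀ x ∈ ball (0 : ℝ^N) 1, evalPoly q x = 0) : q = 0 := by
  have hnhds : (WithLp.toLp 2 : (Fin N → ℝ) → ℝ^N) ⁻¹' ball 0 1 ∈ nhds (0 : Fin N → ℝ) :=
    (PiLp.continuous_toLp 2 _).continuousAt.preimage_mem_nhds
      (isOpen_ball.mem_nhds (by simp))
  obtain ⟨r, hr, hsub⟩ := Metric.mem_nhds_iff.1 hnhds
  refine MvPolynomial.funext_set (fun _ => ball (0 : ℝ) r) (fun _ => ?_) fun y hy => ?_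
  · rw [Real.ball_eq_Ioo]
    exact Ioo_infinite (by linarith)
  · have hyb := h _ (hsub (ball_pi (0 : Fin N → ℝ) hr ▸ hy))
    rw [evalPoly_apply] at hyb
    rw [map_zero]
    exact hyb

/-- The Laplacian on polynomials. -/
noncomputable def lapPoly : MvPolynomial (Fin N) ℝ →ₗ[ℝ] MvPolynomial (Fin N) ℝ :=
  ∑ i, (MvPolynomial.pderiv i).toLinearMap ∘ₗ (MvPolynomial.pderiv i).toLinearMap

lemma lapPoly_apply (p : MvPolynomial (Fin N) ℝ) :
    lapPoly p = ∑ i, MvPolynomial.pderiv i (MvPolynomial.pderiv i p) := by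
  simp [lapPoly, LinearMap.sum_apply]

lemma lap_evalPoly (p : MvPolynomial (Fin N) ℝ) : lap (evalPoly p) = evalPoly (lapPoly p) := by
  ext x
  simp only [lap_apply, lapPoly_apply, map_sum, Finset.sum_apply, pderiv_evalPoly]

lemma biharm_evalPoly (p : MvPolynomial (Fin N) ℝ) :
    biharm (evalPoly p) = evalPoly (lapPoly (lapPoly p)) := by
  ext x
  rw [biharm, lap_evalPoly, lap_evalPoly]

/-- The polynomial `1 - ∑ Xᵢ²` representing `rho`. -/
noncomputable def rhoPoly : MvPolynomial (Fin N) ℝ := 1 - ∑ i, MvPolynomial.X i ^ 2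

lemma evalPoly_rhoPoly : evalPoly (rhoPoly (N := N)) = rho := by
  ext x
  simp [rho_eq_sum, rhoPoly, evalPoly_X]

lemma totalDegree_pderiv_le {m : ℕ} {p : MvPolynomial (Fin N) ℝ} (hp : p.totalDegree ≤ m + 1)
    (i : Fin N) : (MvPolynomial.pderiv i p).totalDegree ≤ m := by
  rw [← MvPolynomial.mem_restrictTotalDegree, p.as_sum, map_sum]
  refine Submodule.sum_mem _ fun s hs => ?_
  rw [MvPolynomial.pderiv_monomial, MvPolynomial.mem_restrictTotalDegree]
  by_cases h0 : s i = 0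
  · simp [h0]
  refine (MvPolynomial.totalDegree_monomial_le _ _).trans ?_
  have hsum : (s.sum fun _ e => e) ≤ m + 1 := (MvPolynomial.le_totalDegree hs).trans hp
  have hsplit : s = (s - Finsupp.single i 1) + Finsupp.single i 1 :=
    (tsub_add_cancel_of_le (Finsupp.single_le_iff.2 (Nat.one_le_iff_ne_zero.2 h0))).symm
  rw [hsplit, Finsupp.sum_add_index' (by simp) (by simp), Finsupp.sum_single_index rfl] at hsum
  exact Nat.le_of_add_le_add_right hsum

lemma totalDegree_lapPoly_le {m : ℕ} {p : MvPolynomial (Fin N) ℝ} (hp : p.totalDegree ≤ m + 2) :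
    (lapPoly p).totalDegree ≤ m := by
  rw [lapPoly_apply]
  exact MvPolynomial.totalDegree_finsetSum_le fun i _ =>
    totalDegree_pderiv_le (totalDegree_pderiv_le hp i) i

lemma totalDegree_rhoPoly_le : (rhoPoly (N := N)).totalDegree ≤ 2 := by
  refine (MvPolynomial.totalDegree_sub _ _).trans (max_le (by simp) ?_)
  exact MvPolynomial.totalDegree_finsetSum_le fun i _ =>
    (MvPolynomial.totalDegree_pow _ _).trans (by simp)

end PolynomialFunctions

section PolynomialSolutions

variable {N : ℕ}

lemma isTest_rho_sq_mul {g : ℝ^N → ℝ} (hg : ContDiff ℝ 4 g) :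
    IsTest N (fun x => rho x * rho x * g x) := by
  have hρ : ContDiff ℝ 4 (rho (N := N)) := rho_contDiff
  refine ⟨((hρ.mul hρ).mul hg).contDiffOn, fun x hx => by simp [rho, hx], fun x hx => ?_⟩
  have hxK : x ∈ closedBall (0 : ℝ^N) 1 := by simp [hx]
  have hx0 : rho x = 0 := by simp [rho, hx]
  have hρx := hρ.differentiable (by norm_num) x
  have hgx := hg.differentiable (by norm_num) x
  rw [((hρx.fun_mul hρx).fun_mul hgx).fderivWithin (uniqueDiffOn_closedBall x hxK),
    fderiv_fun_mul (hρx.fun_mul hρx) hgx, fderiv_fun_mul hρx hρx, hx0]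
  simp

/-- The operator `q ↦ Δ²(ρ² q)` on polynomials. As it does not raise the degree, it is bijective
as soon as it is injective. -/
noncomputable def clampedBiharmPoly : MvPolynomial (Fin N) ℝ →ₗ[ℝ] MvPolynomial (Fin N) ℝ :=
  lapPoly ∘ₗ lapPoly ∘ₗ LinearMap.mulLeft ℝ (rhoPoly * rhoPoly)

lemma evalPoly_rhoPoly_sq_mul (q : MvPolynomial (Fin N) ℝ) :
    evalPoly (rhoPoly * rhoPoly * q) = fun x => rho x * rho x * evalPoly q x := by
  rw [map_mul, map_mul, evalPoly_rhoPoly]; rfl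

lemma isTest_evalPoly (q : MvPolynomial (Fin N) ℝ) :
    IsTest N (evalPoly (rhoPoly * rhoPoly * q)) := by
  rw [evalPoly_rhoPoly_sq_mul]
  exact isTest_rho_sq_mul (evalPoly_contDiff q)

lemma biharm_evalPoly_rhoPoly_sq_mul (q : MvPolynomial (Fin N) ℝ) :
    biharm (evalPoly (rhoPoly * rhoPoly * q)) = evalPoly (clampedBiharmPoly q) :=
  biharm_evalPoly _

lemma totalDegree_clampedBiharmPoly_le {m : ℕ} {q : MvPolynomial (Fin N) ℝ}
    (hq : q.totalDegree ≤ m) : (clampedBiharmPoly q).totalDegree ≤ m := by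
  refine totalDegree_lapPoly_le (totalDegree_lapPoly_le
    ((MvPolynomial.totalDegree_mul _ _).trans ?_))
  have := MvPolynomial.totalDegree_mul (rhoPoly (N := N)) rhoPoly
  have := totalDegree_rhoPoly_le (N := N)
  omega

lemma clampedBiharmPoly_injective (hN : 0 < N) :
    Function.Injective (clampedBiharmPoly (N := N)) := by
  have hnonneg : ∀ q : MvPolynomial (Fin N) ℝ, clampedBiharmPoly q = 0 →
      ∀ x ∈ ball (0 : ℝ^N) 1, 0 ≤ evalPoly q x := fun q hq x hx => by
    have := (isTest_evalPoly q).nonneg_of_biharm_nonneg hN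
      (fun y _ => by rw [biharm_evalPoly_rhoPoly_sq_mul, hq, map_zero]; rfl) x
      (ball_subset_closedBall hx)
    rw [evalPoly_rhoPoly_sq_mul] at this
    exact nonneg_of_mul_nonneg_right this (mul_pos (rho_pos hx) (rho_pos hx))
  refine (injective_iff_map_eq_zero _).2 fun q hq => eq_zero_of_evalPoly_eq_zero fun x hx => ?_
  have hneg := hnonneg (-q) (by rw [map_neg, hq, neg_zero]) x hx
  rw [map_neg, Pi.neg_apply] at hneg
  exact le_antisymm (neg_nonneg.1 hneg) (hnonneg q hq x hx)

lemma clampedBiharmPoly_surjective (hN : 0 < N) :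
    Function.Surjective (clampedBiharmPoly (N := N)) := by
  intro p
  let W := MvPolynomial.restrictTotalDegree (Fin N) ℝ p.totalDegree
  have hW : ∀ q ∈ W, clampedBiharmPoly q ∈ W := fun q hq => by
    rw [MvPolynomial.mem_restrictTotalDegree] at hq ⊢
    exact totalDegree_clampedBiharmPoly_le hq
  have hinj : Function.Injective (clampedBiharmPoly.restrict hW) := fun a b hab =>
    Subtype.ext (clampedBiharmPoly_injective hN (congrArg Subtype.val hab))
  obtain ⟨q, hq⟩ := LinearMap.injective_iff_surjective.1 hinj
    ⟨p, by rw [MvPolynomial.mem_restrictTotalDegree]⟩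
  exact ⟨q, congrArg Subtype.val hq⟩

/-- The solution operator of `Δ²φ = p`, `φ = ∂_ν φ = 0` on the sphere, on polynomials. -/
noncomputable def clampedSol (hN : 0 < N) : MvPolynomial (Fin N) ℝ →ₗ[ℝ] MvPolynomial (Fin N) ℝ :=
  LinearMap.mulLeft ℝ (rhoPoly * rhoPoly) ∘ₗ (LinearEquiv.ofBijective clampedBiharmPoly
    ⟨clampedBiharmPoly_injective hN, clampedBiharmPoly_surjective hN⟩).symm.toLinearMap

lemma isTest_clampedSol (hN : 0 < N) (p : MvPolynomial (Fin N) ℝ) :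
    IsTest N (evalPoly (clampedSol hN p)) :=
  isTest_evalPoly _

lemma biharm_clampedSol (hN : 0 < N) (p : MvPolynomial (Fin N) ℝ) :
    biharm (evalPoly (clampedSol hN p)) = evalPoly p :=
  (biharm_evalPoly_rhoPoly_sq_mul _).trans
    (congrArg evalPoly ((LinearEquiv.ofBijective clampedBiharmPoly _).apply_symm_apply p))

lemma clampedSol_nonneg (hN : 0 < N) {p : MvPolynomial (Fin N) ℝ}
    (hp : ∀ x ∈ closedBall (0 : ℝ^N) 1, 0 ≤ evalPoly p x) :
    ∀ x ∈ closedBall (0 : ℝ^N) 1, 0 ≤ evalPoly (clampedSol hN p) x :=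
  (isTest_clampedSol hN p).nonneg_of_biharm_nonneg hN fun x hx => by
    rw [biharm_clampedSol]
    exact hp x (ball_subset_closedBall hx)

lemma exists_abs_evalPoly_sub_lt {K : Set ℝ^N} (hK : IsCompact K) {g : ℝ^N → ℝ}
    (hg : ContinuousOn g K) {ε : ℝ} (hε : 0 < ε) :
    ∃ p : MvPolynomial (Fin N) ℝ, ∀ x ∈ K, |evalPoly p x - g x| < ε := by
  have : CompactSpace K := isCompact_iff_compactSpace.1 hK
  let coord : Fin N → C(K, ℝ) := fun i => ⟨fun x => x.1 i, by fun_prop⟩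
  have heval : ∀ (p : MvPolynomial (Fin N) ℝ) (x : K),
      MvPolynomial.aeval coord p x = evalPoly p x := fun p x => by
    induction p using MvPolynomial.induction_on with
    | C a => simp
    | add p q hp hq => simp [hp, hq]
    | mul_X p j hp => simp [hp, evalPoly_X, coord]
  have hsep : (MvPolynomial.aeval (R := ℝ) coord).range.SeparatesPoints := fun x y hxy => by
    obtain ⟨i, hi⟩ : ∃ i, x.1 i ≠ y.1 i := by
      by_contra! h
      exact hxy (Subtype.ext (by ext i; exact h i))
    exact ⟨coord i, ⟨coord i, ⟨MvPolynomial.X i, MvPolynomial.aeval_X _ i⟩, rfl⟩, hi⟩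
  obtain ⟨⟨_, p, rfl⟩, hp⟩ :=
    ContinuousMap.exists_mem_subalgebra_near_continuous_of_separatesPoints _ hsep (K.domRestrict g)
      (continuousOn_iff_continuous_domRestrict.1 hg) ε hε
  refine ⟨p, fun x hx => ?_⟩
  rw [← heval p ⟨x, hx⟩]
  exact hp ⟨x, hx⟩

end PolynomialSolutions

/-! ### Testing against nonnegative functions -/

section Testing

variable {X : Type*} [TopologicalSpace X] [HasOuterApproxClosed X] [MeasurableSpace X]
  [BorelSpace X] {μ : Measure X} {f : X → ℝ}

lemma setIntegral_nonneg_of_forall_integral_mul_nonneg (hf : Integrable f μ)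
    (h : ∀ η : X → ℝ, Continuous η → (∀ x, 0 ≤ η x) → 0 ≤ ∫ x, f x * η x ∂μ)
    {F : Set X} (hF : IsClosed F) : 0 ≤ ∫ x in F, f x ∂μ := by
  have hcont : ∀ n, Continuous fun x => (hF.apprSeq n x : ℝ) := fun n =>
    NNReal.continuous_coe.comp (hF.apprSeq n).continuous
  have hlim : Tendsto (fun n => ∫ x, f x * hF.apprSeq n x ∂μ) atTop
      (nhds (∫ x, F.indicator f x ∂μ)) := by
    refine tendsto_integral_of_dominated_convergence (fun x => |f x|)
      (fun n => hf.1.mul (hcont n).aestronglyMeasurable) hf.abs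
      (fun n => Eventually.of_forall fun x => ?_) (Eventually.of_forall fun x => ?_)
    · rw [norm_mul, NNReal.norm_eq]
      exact mul_le_of_le_one_right (norm_nonneg _)
        (NNReal.coe_le_one.2 (HasOuterApproxClosed.apprSeq_apply_le_one hF n x))
    · have hx := ((NNReal.continuous_coe.tendsto _).comp
        (tendsto_pi_nhds.1 (HasOuterApproxClosed.tendsto_apprSeq hF) x)).const_mul (f x)
      by_cases hxF : x ∈ F <;> simpa [hxF] using hx
  rw [← integral_indicator hF.measurableSet]
  exact ge_of_tendsto' hlim fun n => h _ (hcont n) fun x => NNReal.coe_nonneg _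

lemma ae_nonneg_of_forall_integral_mul_nonneg [IsFiniteMeasure μ] [μ.WeaklyRegular]
    (hf : Integrable f μ)
    (h : ∀ η : X → ℝ, Continuous η → (∀ x, 0 ≤ η x) → 0 ≤ ∫ x, f x * η x ∂μ) :
    ∀ᵐ x ∂μ, 0 ≤ f x := by
  set s := {x | hf.1.mk f x < 0}
  have hs : MeasurableSet s :=
    measurableSet_lt hf.1.stronglyMeasurable_mk.measurable measurable_const
  suffices hs0 : μ s = 0 by
    have hmk : ∀ᵐ x ∂μ, x ∉ s := measure_eq_zero_iff_ae_notMem.1 hs0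
    filter_upwards [hf.1.ae_eq_mk, hmk] with x hx hxs
    rw [hx]
    exact not_lt.1 hxs
  by_contra hs0
  obtain ⟨F, hFs, hF, hμF⟩ :=
    hs.exists_lt_isClosed_of_ne_top (measure_ne_top μ s) (pos_iff_ne_zero.2 hs0)
  have hneg : ∀ᵐ x ∂μ.restrict F, f x < 0 := by
    filter_upwards [ae_restrict_of_ae hf.1.ae_eq_mk, ae_restrict_mem hF.measurableSet] with x hx hxF
    rw [hx]
    exact hFs hxF
  have hpos : 0 < ∫ x in F, -f x ∂μ := by
    rw [integral_pos_iff_support_of_nonneg_ae (hneg.mono fun x hx => (neg_pos.2 hx).le)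
      hf.integrableOn.neg, measure_eq_measure_of_null_sdiff (subset_univ _),
      Measure.restrict_apply_univ]
    · exact hμF
    · exact measure_mono_null (fun x hx => by simpa using hx.2)
        (ae_iff.1 (hneg.mono fun x hx => hx.ne))
  rw [integral_neg] at hpos
  linarith [setIntegral_nonneg_of_forall_integral_mul_nonneg hf h hF]

end Testing

section UnitBall

variable {N : ℕ} {f g h c : ℝ^N → ℝ} {a b C : ℝ}

/-- Lebesgue measure restricted to the unit ball. -/
noncomputable abbrev ballMeasure (N : ℕ) : Measure (ℝ^N) := volume.restrict (ball (0 : ℝ^N) 1)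

instance : IsFiniteMeasure (ballMeasure N) :=
  ⟨by rw [Measure.restrict_apply_univ]; exact measure_ball_lt_top⟩

lemma memLp_ballMeasure_of_continuousOn (hg : ContinuousOn g (closedBall 0 1)) (p : ENNReal) :
    MemLp g p (ballMeasure N) := by
  obtain ⟨C, hC⟩ := (isCompact_closedBall (0 : ℝ^N) 1).exists_bound_of_continuousOn hg
  refine MemLp.of_bound
    ((hg.mono ball_subset_closedBall).aestronglyMeasurable measurableSet_ball) C ?_
  filter_upwards [ae_restrict_mem measurableSet_ball] with x hx
  exact hC x (ball_subset_closedBall hx)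

lemma integrable_mul_of_continuousOn (hf : Integrable f (ballMeasure N))
    (hg : ContinuousOn g (closedBall 0 1)) :
    Integrable (fun x => f x * g x) (ballMeasure N) :=
  hf.mul_of_top_left (memLp_ballMeasure_of_continuousOn hg ⊤)

lemma abs_integral_mul_sub_le (hg : Integrable (fun x => f x * g x) (ballMeasure N))
    (hh : Integrable (fun x => f x * h x) (ballMeasure N))
    (hc : Integrable (fun x => |f x| * c x) (ballMeasure N))
    (hgh : ∀ x ∈ ball (0 : ℝ^N) 1, |g x - h x| ≤ c x) :
    |∫ x, f x * g x ∂ballMeasure N - ∫ x, f x * h x ∂ballMeasure N|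
      ≤ ∫ x, |f x| * c x ∂ballMeasure N := by
  rw [← integral_sub hg hh]
  refine abs_integral_le_integral_abs.trans (integral_mono_ae (hg.sub hh).abs hc ?_)
  filter_upwards [ae_restrict_mem measurableSet_ball] with x hx
  simp only [← mul_sub, abs_mul]
  exact mul_le_mul_of_nonneg_left (hgh x hx) (abs_nonneg _)

lemma le_of_forall_pos_le_add_mul (h : ∀ ε > 0, a ≤ b + C * ε) : a ≤ b := by
  have hlim : Tendsto (fun ε => b + C * ε) (nhdsWithin 0 (Ioi 0)) (nhds (b + C * 0)) :=
    (Continuous.tendsto (by fun_prop) _).mono_left nhdsWithin_le_nhds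
  rw [mul_zero, add_zero] at hlim
  exact ge_of_tendsto hlim (eventually_nhdsWithin_of_forall h)

lemma exists_evalPoly_mem_Icc (hg : ContinuousOn g (closedBall 0 1)) {ε : ℝ} (hε : 0 < ε) :
    ∃ p : MvPolynomial (Fin N) ℝ, ∀ x ∈ closedBall (0 : ℝ^N) 1,
      evalPoly p x ∈ Icc (g x) (g x + ε) := by
  obtain ⟨p, hp⟩ := exists_abs_evalPoly_sub_lt (isCompact_closedBall _ _)
    (g := fun x => g x + ε / 2) (hg.add continuousOn_const) (half_pos hε)
  refine ⟨p, fun x hx => ?_⟩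
  have := abs_lt.1 (hp x hx)
  exact ⟨by linarith, by linarith⟩

lemma ae_nonneg_of_forall_evalPoly (hf : Integrable f (ballMeasure N))
    (h : ∀ p : MvPolynomial (Fin N) ℝ, (∀ x ∈ closedBall (0 : ℝ^N) 1, 0 ≤ evalPoly p x) →
      0 ≤ ∫ x, f x * evalPoly p x ∂ballMeasure N) :
    ∀ᵐ x ∂ballMeasure N, 0 ≤ f x := by
  refine ae_nonneg_of_forall_integral_mul_nonneg hf fun η hη hη0 =>
    le_of_forall_pos_le_add_mul (C := ∫ x, |f x| ∂ballMeasure N) fun ε hε => ?_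
  obtain ⟨p, hp⟩ := exists_evalPoly_mem_Icc hη.continuousOn hε
  have hpos := h p fun x hx => (hη0 x).trans (hp x hx).1
  have hclose := abs_integral_mul_sub_le (c := fun _ => ε)
    (integrable_mul_of_continuousOn hf (evalPoly_continuousOn p))
    (integrable_mul_of_continuousOn hf hη.continuousOn) (hf.abs.mul_const ε) fun x hx => by
      have := hp x (ball_subset_closedBall hx)
      exact abs_le.2 ⟨by linarith [this.1], by linarith [this.2]⟩
  rw [integral_mul_const] at hclose
  linarith [(abs_le.1 hclose).2]

end UnitBall

/-! ### The linear problem with integrable right-hand side -/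

section Riesz

variable {N : ℕ} {V : ℝ^N → ℝ} {ℓ : MvPolynomial (Fin N) ℝ →ₗ[ℝ] ℝ}

lemma memLp_evalPoly (p : MvPolynomial (Fin N) ℝ) (q : ENNReal) :
    MemLp (evalPoly p) q (ballMeasure N) :=
  memLp_ballMeasure_of_continuousOn (evalPoly_continuousOn p) q

/-- Polynomials as elements of `L²` of the unit ball. -/
noncomputable def polyToL2 : MvPolynomial (Fin N) ℝ →ₗ[ℝ] Lp ℝ 2 (ballMeasure N) where
  toFun p := (memLp_evalPoly p 2).toLp (evalPoly p)
  map_add' p q := by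
    rw [← MemLp.toLp_add]
    congr 1
    exact map_add evalPoly p q
  map_smul' c p := by
    rw [RingHom.id_apply, ← MemLp.toLp_const_smul]
    congr 1
    exact map_smul evalPoly c p

lemma coeFn_polyToL2 (p : MvPolynomial (Fin N) ℝ) :
    polyToL2 p =ᵐ[ballMeasure N] evalPoly p :=
  (memLp_evalPoly p 2).coeFn_toLp

lemma exists_memLp_of_abs_le_mul_norm {C : ℝ} (h : ∀ p, |ℓ p| ≤ C * ‖polyToL2 p‖) :
    ∃ v : ℝ^N → ℝ, MemLp v 2 (ballMeasure N) ∧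
      ∀ p, ∫ x, v x * evalPoly p x ∂ballMeasure N = ℓ p := by
  obtain ⟨T, hT, -⟩ := exists_extension_norm_eq (LinearMap.range (polyToL2 (N := N)))
    (ℓ.compLeftInverse polyToL2)
  set w := (InnerProductSpace.toDual ℝ (Lp ℝ 2 (ballMeasure N))).symm T with hw
  refine ⟨w, Lp.memLp w, fun p => ?_⟩
  have hTp : T (polyToL2 p) = ℓ p :=
    (hT ⟨polyToL2 p, p, rfl⟩).trans (LinearMap.compLeftInverse_apply_of_bdd _ _ ⟨C, h⟩ p _ rfl)
  rw [← hTp, ← InnerProductSpace.toDual_symm_apply, L2.inner_def]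
  refine integral_congr_ae ?_
  filter_upwards [coeFn_polyToL2 p] with x hx
  simp [hx, ← hw, mul_comm]

lemma abs_le_integral_of_nonneg_of_le (hV : Integrable V (ballMeasure N))
    (hℓ : ∀ p, (∀ x ∈ closedBall (0 : ℝ^N) 1, 0 ≤ evalPoly p x) →
      0 ≤ ℓ p ∧ ℓ p ≤ ∫ x, V x * evalPoly p x ∂ballMeasure N) (p : MvPolynomial (Fin N) ℝ) :
    |ℓ p| ≤ ∫ x, |V x| * |evalPoly p x| ∂ballMeasure N := by
  have habs := (evalPoly_continuousOn p (s := closedBall 0 1)).abs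
  refine le_of_forall_pos_le_add_mul (C := ∫ x, |V x| ∂ballMeasure N) fun ε hε => ?_
  obtain ⟨P, hP⟩ := exists_evalPoly_mem_Icc habs hε
  have hpP : |ℓ p| ≤ ℓ P := by
    have hadd := (hℓ (P + p) fun x hx => by
      rw [map_add, Pi.add_apply]; linarith [(hP x hx).1, neg_abs_le (evalPoly p x)]).1
    have hsub := (hℓ (P - p) fun x hx => by
      rw [map_sub, Pi.sub_apply]; linarith [(hP x hx).1, le_abs_self (evalPoly p x)]).1
    rw [map_add] at hadd
    rw [map_sub] at hsub
    exact abs_le.2 ⟨by linarith, by linarith⟩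
  have hint := integrable_mul_of_continuousOn hV.abs habs
  calc |ℓ p| ≤ ∫ x, V x * evalPoly P x ∂ballMeasure N :=
        hpP.trans (hℓ P fun x hx => (abs_nonneg _).trans (hP x hx).1).2
    _ ≤ ∫ x, (|V x| * |evalPoly p x| + |V x| * ε) ∂ballMeasure N := by
        refine integral_mono_ae (integrable_mul_of_continuousOn hV (evalPoly_continuousOn P))
          (hint.add (hV.abs.mul_const ε)) ?_
        filter_upwards [ae_restrict_mem measurableSet_ball] with x hx
        have hPx := hP x (ball_subset_closedBall hx)
        simp only [← mul_add]
        exact mul_le_mul (le_abs_self _) hPx.2 ((abs_nonneg _).trans hPx.1) (abs_nonneg _)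
    _ = _ := by rw [integral_add hint (hV.abs.mul_const ε), integral_mul_const]

lemma exists_density_of_nonneg_of_le (hV : MemLp V 2 (ballMeasure N))
    (hℓ : ∀ p, (∀ x ∈ closedBall (0 : ℝ^N) 1, 0 ≤ evalPoly p x) →
      0 ≤ ℓ p ∧ ℓ p ≤ ∫ x, V x * evalPoly p x ∂ballMeasure N) :
    ∃ v : ℝ^N → ℝ, Integrable v (ballMeasure N) ∧
      (∀ᵐ x ∂ballMeasure N, 0 ≤ v x ∧ v x ≤ V x) ∧
      ∀ p, ∫ x, v x * evalPoly p x ∂ballMeasure N = ℓ p := by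
  have hVi : Integrable V (ballMeasure N) := hV.integrable one_le_two
  have hbound : ∀ p, |ℓ p| ≤ ‖hV.abs.toLp‖ * ‖polyToL2 p‖ := fun p => by
    have hinner : ∫ x, |V x| * |evalPoly p x| ∂ballMeasure N
        = inner ℝ hV.abs.toLp |polyToL2 p| := by
      rw [L2.inner_def]
      refine integral_congr_ae ?_
      filter_upwards [coeFn_polyToL2 p, hV.abs.coeFn_toLp, Lp.coeFn_abs (polyToL2 p)]
        with x hp hVx habs
      rw [habs, hVx, hp]
      simp [mul_comm]
    refine (abs_le_integral_of_nonneg_of_le hVi hℓ p).trans ?_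
    rw [hinner, ← norm_abs_eq_norm (polyToL2 p)]
    exact real_inner_le_norm _ _
  obtain ⟨v, hv2, hv⟩ := exists_memLp_of_abs_le_mul_norm hbound
  have hvi : Integrable v (ballMeasure N) := hv2.integrable one_le_two
  have hv0 : ∀ᵐ x ∂ballMeasure N, 0 ≤ v x :=
    ae_nonneg_of_forall_evalPoly hvi fun p hp => by rw [hv]; exact (hℓ p hp).1
  have hvV : ∀ᵐ x ∂ballMeasure N, 0 ≤ V x - v x :=
    ae_nonneg_of_forall_evalPoly (hVi.sub hvi) fun p hp => by
      simp only [sub_mul]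
      rw [integral_sub (integrable_mul_of_continuousOn hVi (evalPoly_continuousOn p))
        (integrable_mul_of_continuousOn hvi (evalPoly_continuousOn p)), hv]
      exact sub_nonneg.2 (hℓ p hp).2
  refine ⟨v, hvi, ?_, hv⟩
  filter_upwards [hv0, hvV] with x h0 hV using ⟨h0, sub_nonneg.1 hV⟩

end Riesz

section LinearProblem

variable {N : ℕ} {φ ψ f v V : ℝ^N → ℝ}

lemma IsTest.add (hφ : IsTest N φ) (hψ : IsTest N ψ) : IsTest N (fun x => φ x + ψ x) := by
  refine ⟨hφ.1.add hψ.1, fun x hx => by simp [hφ.2.1 x hx, hψ.2.1 x hx], fun x hx => ?_⟩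
  have hxK : x ∈ closedBall (0 : ℝ^N) 1 := by simp [hx]
  rw [fderivWithin_fun_add (uniqueDiffOn_closedBall x hxK)
    (hφ.1.differentiableOn (by norm_num) x hxK) (hψ.1.differentiableOn (by norm_num) x hxK),
    hφ.2.2 x hx, hψ.2.2 x hx, add_zero]

lemma IsTest.const_mul (hφ : IsTest N φ) (c : ℝ) : IsTest N (fun x => c * φ x) := by
  refine ⟨contDiffOn_const.mul hφ.1, fun x hx => by simp [hφ.2.1 x hx], fun x hx => ?_⟩
  have hxK : x ∈ closedBall (0 : ℝ^N) 1 := by simp [hx]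
  rw [fderivWithin_const_mul (uniqueDiffOn_closedBall x hxK)
    (hφ.1.differentiableOn (by norm_num) x hxK), hφ.2.2 x hx, smul_zero]

lemma IsTest.contDiffOn_lap (hφ : IsTest N φ) : ContDiffOn ℝ 2 (lap φ) (ball 0 1) :=
  lap_contDiffOn isOpen_ball hφ.contDiffOn_ball (by norm_num)

lemma IsTest.biharm_add (hφ : IsTest N φ) (hψ : IsTest N ψ) :
    EqOn (biharm fun x => φ x + ψ x) (fun x => biharm φ x + biharm ψ x) (ball 0 1) :=
  (lap_congr isOpen_ball (lap_add isOpen_ball (hφ.contDiffOn_ball.of_le (by norm_num))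
    (hψ.contDiffOn_ball.of_le (by norm_num)))).trans
    (lap_add isOpen_ball hφ.contDiffOn_lap hψ.contDiffOn_lap)

lemma IsTest.biharm_const_mul (hφ : IsTest N φ) (c : ℝ) :
    EqOn (biharm fun x => c * φ x) (fun x => c * biharm φ x) (ball 0 1) :=
  (lap_congr isOpen_ball (lap_const_mul isOpen_ball c
    (hφ.contDiffOn_ball.of_le (by norm_num)))).trans
    (lap_const_mul isOpen_ball c hφ.contDiffOn_lap)

lemma IsTest.continuousOn_lapW_lapW (hφ : IsTest N φ) :
    ContinuousOn (lapW (lapW φ)) (closedBall 0 1) :=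
  (lapW_contDiffOn (n := 0) (lapW_contDiffOn (n := 2) hφ.1 (by norm_num))
    (by norm_num)).continuousOn

lemma IsTest.integrable_mul_biharm (hφ : IsTest N φ) (hv : Integrable v (ballMeasure N)) :
    Integrable (fun x => v x * biharm φ x) (ballMeasure N) := by
  refine (integrable_mul_of_continuousOn hv hφ.continuousOn_lapW_lapW).congr ?_
  filter_upwards [ae_restrict_mem measurableSet_ball] with x hx
  rw [lapW_lapW_eqOn φ hx]

lemma IsTest.le_of_biharm_le (hN : 0 < N) (hφ : IsTest N φ) (hψ : IsTest N ψ)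
    (h : ∀ x ∈ ball (0 : ℝ^N) 1, biharm φ x ≤ biharm ψ x) :
    ∀ x ∈ closedBall (0 : ℝ^N) 1, φ x ≤ ψ x := by
  have hφ' := hφ.const_mul (-1)
  intro x hx
  have := (hψ.add hφ').nonneg_of_biharm_nonneg hN (fun y hy => by
    rw [hψ.biharm_add hφ' hy]
    simp only [hφ.biharm_const_mul (-1) hy]
    linarith [h y hy]) x hx
  linarith

lemma IsTest.abs_sub_le_of_abs_biharm_sub_le (hN : 0 < N) (hφ : IsTest N φ) (hψ : IsTest N ψ)
    {ε : ℝ} (h : ∀ x ∈ ball (0 : ℝ^N) 1, |biharm φ x - biharm ψ x| ≤ ε) :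
    ∀ x ∈ closedBall (0 : ℝ^N) 1, |φ x - ψ x| ≤ ε * evalPoly (clampedSol hN 1) x := by
  have hone := (isTest_clampedSol hN 1).const_mul ε
  have hbi : EqOn (biharm fun x => ε * evalPoly (clampedSol hN 1) x) (fun _ => ε) (ball 0 1) :=
    fun x hx => by
      rw [(isTest_clampedSol hN 1).biharm_const_mul ε hx]
      simp only [biharm_clampedSol, evalPoly_one, mul_one]
  have hle : ∀ {φ ψ : ℝ^N → ℝ}, IsTest N φ → IsTest N ψ →
      (∀ x ∈ ball (0 : ℝ^N) 1, biharm φ x ≤ biharm ψ x + ε) →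
      ∀ x ∈ closedBall (0 : ℝ^N) 1, φ x ≤ ψ x + ε * evalPoly (clampedSol hN 1) x :=
    fun hφ hψ h => hφ.le_of_biharm_le hN (hψ.add hone) fun x hx => by
      rw [hψ.biharm_add hone hx]
      simp only [hbi hx]
      exact h x hx
  intro x hx
  have h1 := hle hφ hψ (fun y hy => by linarith [(abs_le.1 (h y hy)).2]) x hx
  have h2 := hle hψ hφ (fun y hy => by linarith [(abs_le.1 (h y hy)).1]) x hx
  exact abs_le.2 ⟨by linarith, by linarith⟩

lemma IsTest.integral_mul_biharm_eq (hN : 0 < N) (hv : Integrable v (ballMeasure N))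
    (hf : Integrable f (ballMeasure N))
    (h : ∀ p, ∫ x, v x * evalPoly p x ∂ballMeasure N
      = ∫ x, f x * evalPoly (clampedSol hN p) x ∂ballMeasure N) (hφ : IsTest N φ) :
    ∫ x, v x * biharm φ x ∂ballMeasure N = ∫ x, f x * φ x ∂ballMeasure N := by
  set one := evalPoly (clampedSol hN 1)
  refine sub_eq_zero.1 (abs_nonpos_iff.1 (le_of_forall_pos_le_add_mul
    (C := ∫ x, |v x| ∂ballMeasure N + ∫ x, |f x| * one x ∂ballMeasure N) fun ε hε => ?_))
  obtain ⟨p, hp⟩ := exists_abs_evalPoly_sub_lt (isCompact_closedBall _ _)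
    hφ.continuousOn_lapW_lapW hε
  have hp' : ∀ x ∈ ball (0 : ℝ^N) 1, |biharm φ x - evalPoly p x| ≤ ε := fun x hx => by
    rw [← lapW_lapW_eqOn φ hx, abs_sub_comm]
    exact (hp x (ball_subset_closedBall hx)).le
  have hsol := hφ.abs_sub_le_of_abs_biharm_sub_le hN (isTest_clampedSol hN p)
    (by simpa only [biharm_clampedSol] using hp')
  have hv_close := abs_integral_mul_sub_le (hφ.integrable_mul_biharm hv)
    (integrable_mul_of_continuousOn hv (evalPoly_continuousOn p)) (hv.abs.mul_const ε) hp'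
  have hone : ContinuousOn (fun x => ε * one x) (closedBall 0 1) :=
    continuousOn_const.mul (evalPoly_continuousOn _)
  have hf_close := abs_integral_mul_sub_le (integrable_mul_of_continuousOn hf hφ.1.continuousOn)
    (integrable_mul_of_continuousOn hf (evalPoly_continuousOn (clampedSol hN p)))
    (integrable_mul_of_continuousOn hf.abs hone) fun x hx => hsol x (ball_subset_closedBall hx)
  simp only [mul_left_comm _ ε] at hf_close
  rw [integral_mul_const, h] at hv_close
  rw [integral_const_mul] at hf_close
  rw [zero_add, add_mul, mul_comm (∫ x, |f x| * one x ∂_) ε]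
  rw [abs_sub_comm] at hf_close
  exact (abs_sub_le _ _ _).trans (add_le_add hv_close hf_close)

lemma ae_le_of_forall_integral_mul_biharm_le (hN : 0 < N) (hv : Integrable v (ballMeasure N))
    (hV : Integrable V (ballMeasure N))
    (h : ∀ φ, IsTest N φ → (∀ x ∈ closedBall (0 : ℝ^N) 1, 0 ≤ φ x) →
      ∫ x, v x * biharm φ x ∂ballMeasure N ≤ ∫ x, V x * biharm φ x ∂ballMeasure N) :
    ∀ᵐ x ∂ballMeasure N, v x ≤ V x := by
  have hnonneg : ∀ᵐ x ∂ballMeasure N, 0 ≤ V x - v x :=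
    ae_nonneg_of_forall_evalPoly (hV.sub hv) fun p hp => by
      have hle := h _ (isTest_clampedSol hN p) (clampedSol_nonneg hN hp)
      simp only [biharm_clampedSol] at hle
      simp only [sub_mul]
      rw [integral_sub (integrable_mul_of_continuousOn hV (evalPoly_continuousOn p))
        (integrable_mul_of_continuousOn hv (evalPoly_continuousOn p))]
      exact sub_nonneg.2 hle
  exact hnonneg.mono fun x hx => sub_nonneg.1 hx

/-- The functional `p ↦ ∫ f φ`, where `Δ²φ = p` with clamped boundary conditions. -/
noncomputable def dualFunctional (hN : 0 < N) (hf : Integrable f (ballMeasure N)) :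
    MvPolynomial (Fin N) ℝ →ₗ[ℝ] ℝ where
  toFun p := ∫ x, f x * evalPoly (clampedSol hN p) x ∂ballMeasure N
  map_add' p q := by
    rw [← integral_add (integrable_mul_of_continuousOn hf (evalPoly_continuousOn _))
      (integrable_mul_of_continuousOn hf (evalPoly_continuousOn _))]
    simp only [map_add, Pi.add_apply, mul_add]
  map_smul' c p := by
    rw [RingHom.id_apply, smul_eq_mul, ← integral_const_mul]
    simp only [map_smul, Pi.smul_apply, smul_eq_mul, mul_left_comm]

theorem exists_integral_mul_biharm_eq_of_le (hN : 0 < N) (hf : Integrable f (ballMeasure N))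
    (hf0 : ∀ᵐ x ∂ballMeasure N, 0 ≤ f x) (hV : MemLp V 2 (ballMeasure N))
    (h : ∀ φ, IsTest N φ → (∀ x ∈ closedBall (0 : ℝ^N) 1, 0 ≤ φ x) →
      ∫ x, f x * φ x ∂ballMeasure N ≤ ∫ x, V x * biharm φ x ∂ballMeasure N) :
    ∃ v : ℝ^N → ℝ, Integrable v (ballMeasure N) ∧
      (∀ᵐ x ∂ballMeasure N, 0 ≤ v x ∧ v x ≤ V x) ∧
      ∀ φ, IsTest N φ →
        ∫ x, v x * biharm φ x ∂ballMeasure N = ∫ x, f x * φ x ∂ballMeasure N := by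
  have hdual : ∀ p, (∀ x ∈ closedBall (0 : ℝ^N) 1, 0 ≤ evalPoly p x) →
      0 ≤ dualFunctional hN hf p ∧
        dualFunctional hN hf p ≤ ∫ x, V x * evalPoly p x ∂ballMeasure N := fun p hp => by
    have hsol := clampedSol_nonneg hN hp
    refine ⟨integral_nonneg_of_ae ?_, ?_⟩
    · filter_upwards [hf0, ae_restrict_mem measurableSet_ball] with x hx hxB
      exact mul_nonneg hx (hsol x (ball_subset_closedBall hxB))
    · have hle := h _ (isTest_clampedSol hN p) hsol
      rwa [biharm_clampedSol] at hle
  obtain ⟨v, hv, hvV, hvp⟩ := exists_density_of_nonneg_of_le hV hdual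
  exact ⟨v, hv, hvV, fun φ hφ => hφ.integral_mul_biharm_eq hN hv hf hvp⟩

end LinearProblem

/-! ### Monotone iteration below a super-solution -/

section MonotoneIteration

variable {N : ℕ} {lam α β t : ℝ} {U u u₁ u₂ v v₁ v₂ φ : ℝ^N → ℝ} {s : ℕ → ℝ^N → ℝ} {x : ℝ^N}

lemma continuous_Phi (α β : ℝ) : Continuous (Phi (N := N) α β) := by
  unfold Phi
  fun_prop

lemma Phi_le (h : Admissible α β) (x : ℝ^N) : Phi α β x ≤ α - β / 2 := by
  have := mul_nonneg (neg_nonneg.2 h.1) (sq_nonneg ‖x‖)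
  unfold Phi
  linarith

lemma le_Phi (h : Admissible α β) (hx : x ∈ ball (0 : ℝ^N) 1) : α ≤ Phi α β x := by
  have hsq : ‖x‖ ^ 2 ≤ 1 := pow_le_one₀ (norm_nonneg x) (mem_ball_zero_iff.1 hx).le
  have := mul_nonneg (neg_nonneg.2 h.1) (sub_nonneg.2 hsq)
  unfold Phi
  linarith

lemma abs_sub_Phi_le (h : Admissible α β) (hx : x ∈ ball (0 : ℝ^N) 1) (hαt : α ≤ t)
    (ht : t ≤ 1) : |t - Phi α β x| ≤ 1 - α := by
  have hle := Phi_le h x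
  have hge := le_Phi h hx
  have hlt := h.2
  exact abs_le.2 ⟨by linarith, by linarith⟩

-- Measurability is not part of the definition, but `U = 1 - √((1 - U)²)` where `U ≤ 1`.
lemma IsWeakSuperSolutionAB.aestronglyMeasurable (hU : IsWeakSuperSolutionAB N lam α β U) :
    AEStronglyMeasurable U (ballMeasure N) := by
  have hsqrt : AEMeasurable (fun x => 1 - √((((1 - U x) ^ 2)⁻¹)⁻¹)) (ballMeasure N) :=
    (Real.continuous_sqrt.measurable.comp_aemeasurable hU.2.1.1.aemeasurable.inv).const_sub 1
  refine (hsqrt.congr ?_).aestronglyMeasurable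
  filter_upwards [hU.1] with x hx
  rw [inv_inv, Real.sqrt_sq (sub_nonneg.2 hx.2), sub_sub_cancel]

lemma integrable_sub_Phi (hadm : Admissible α β) (hu : AEStronglyMeasurable u (ballMeasure N))
    (hbd : ∀ᵐ x ∂ballMeasure N, α ≤ u x ∧ u x ≤ 1) :
    Integrable (fun x => u x - Phi α β x) (ballMeasure N) := by
  refine Integrable.of_bound (hu.sub (continuous_Phi α β).aestronglyMeasurable) (1 - α) ?_
  filter_upwards [hbd, ae_restrict_mem measurableSet_ball] with x hx hxB
  exact abs_sub_Phi_le hadm hxB hx.1 hx.2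

lemma IsWeakSuperSolutionAB.ae_Phi_le (hN : 0 < N) (hadm : Admissible α β) (hlam : 0 ≤ lam)
    (hU : IsWeakSuperSolutionAB N lam α β U) : ∀ᵐ x ∂ballMeasure N, Phi α β x ≤ U x := by
  have hnonneg := ae_le_of_forall_integral_mul_biharm_le hN (v := fun _ => 0)
    (integrable_zero _ _ _) (integrable_sub_Phi hadm hU.aestronglyMeasurable hU.1)
    fun φ hφ hφ0 => by
      simp only [zero_mul, integral_zero]
      refine le_trans (mul_nonneg hlam (integral_nonneg_of_ae ?_)) (hU.2.2 φ hφ hφ0)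
      filter_upwards [ae_restrict_mem measurableSet_ball] with x hx
      exact div_nonneg (hφ0 x (ball_subset_closedBall hx)) (sq_nonneg _)
  exact hnonneg.mono fun x hx => sub_nonneg.1 hx

lemma div_one_sub_sq_le {a b c : ℝ} (hab : a ≤ b) (hb : b < 1) (hc : 0 ≤ c) :
    c / (1 - a) ^ 2 ≤ c / (1 - b) ^ 2 := by
  have : 0 < 1 - b := sub_pos.2 hb
  gcongr

lemma integrable_div_one_sub_sq (hu : Integrable (fun x => ((1 - u x) ^ 2)⁻¹) (ballMeasure N))
    (hφ : ContinuousOn φ (closedBall 0 1)) :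
    Integrable (fun x => φ x / (1 - u x) ^ 2) (ballMeasure N) := by
  simpa only [div_eq_inv_mul] using integrable_mul_of_continuousOn hu hφ

lemma integral_div_one_sub_sq_le
    (hint : Integrable (fun x => ((1 - u₂ x) ^ 2)⁻¹) (ballMeasure N))
    (hlt : ∀ᵐ x ∂ballMeasure N, u₂ x < 1) (hle : ∀ᵐ x ∂ballMeasure N, u₁ x ≤ u₂ x)
    (hφ : ContinuousOn φ (closedBall 0 1)) (hφ0 : ∀ x ∈ closedBall (0 : ℝ^N) 1, 0 ≤ φ x) :
    ∫ x, φ x / (1 - u₁ x) ^ 2 ∂ballMeasure N ≤ ∫ x, φ x / (1 - u₂ x) ^ 2 ∂ballMeasure N := by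
  have hφ0' : ∀ᵐ x ∂ballMeasure N, 0 ≤ φ x :=
    (ae_restrict_mem measurableSet_ball).mono fun x hx => hφ0 x (ball_subset_closedBall hx)
  refine integral_mono_of_nonneg (hφ0'.mono fun x hx => div_nonneg hx (sq_nonneg _))
    (integrable_div_one_sub_sq hint hφ) ?_
  filter_upwards [hφ0', hlt, hle] with x hx hlt hle
  exact div_one_sub_sq_le hle hlt hx

/-- The functions between the boundary lift `Φ` and the super-solution `U`, among which the
monotone iteration takes place. -/
structure IsBetween (α β : ℝ) (U u : ℝ^N → ℝ) : Prop where
  aestronglyMeasurable : AEStronglyMeasurable u (ballMeasure N)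
  ae_mem : ∀ᵐ x ∂ballMeasure N, u x ∈ Icc (Phi α β x) (U x)

/-- One step of the iteration: `v` is the weak solution of `Δ²v = λ(1 - u)⁻²` with boundary data
`(α, β)`. Fixed points are the weak solutions of the nonlinear problem. -/
def IsIterate (lam α β : ℝ) (u v : ℝ^N → ℝ) : Prop :=
  ∀ φ, IsTest N φ → ∫ x, (v x - Phi α β x) * biharm φ x ∂ballMeasure N =
    lam * ∫ x, φ x / (1 - u x) ^ 2 ∂ballMeasure N

lemma IsBetween.ae_bounds (hadm : Admissible α β) (hU : IsWeakSuperSolutionAB N lam α β U)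
    (hu : IsBetween α β U u) : ∀ᵐ x ∂ballMeasure N, α ≤ u x ∧ u x ≤ 1 := by
  filter_upwards [hu.ae_mem, hU.1, ae_restrict_mem measurableSet_ball] with x hx hUx hxB
  exact ⟨(le_Phi hadm hxB).trans hx.1, hx.2.trans hUx.2⟩

lemma IsBetween.integrable_inv_sq (hU : IsWeakSuperSolutionAB N lam α β U)
    (hlt : ∀ᵐ x ∂ballMeasure N, U x < 1) (hu : IsBetween α β U u) :
    Integrable (fun x => ((1 - u x) ^ 2)⁻¹) (ballMeasure N) := by
  refine Integrable.mono' hU.2.1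
    ((hu.aestronglyMeasurable.aemeasurable.const_sub 1).pow_const 2).inv.aestronglyMeasurable ?_
  filter_upwards [hlt, hu.ae_mem] with x hx hux
  rw [Real.norm_of_nonneg (inv_nonneg.2 (sq_nonneg _))]
  simpa only [one_div] using div_one_sub_sq_le hux.2 hx zero_le_one

lemma IsBetween.exists_isIterate (hN : 0 < N) (hadm : Admissible α β) (hlam : 0 ≤ lam)
    (hU : IsWeakSuperSolutionAB N lam α β U) (hlt : ∀ᵐ x ∂ballMeasure N, U x < 1)
    (hu : IsBetween α β U u) : ∃ v, IsBetween α β U v ∧ IsIterate lam α β u v := by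
  have hUmeas := hU.aestronglyMeasurable.sub
    (continuous_Phi (N := N) α β).aestronglyMeasurable
  have hbd : ∀ᵐ x ∂ballMeasure N, ‖U x - Phi α β x‖ ≤ 1 - α := by
    filter_upwards [hU.1, ae_restrict_mem measurableSet_ball] with x hx hxB
    exact abs_sub_Phi_le hadm hxB hx.1 hx.2
  have hrhs : ∀ φ : ℝ^N → ℝ, ∫ x, lam * ((1 - u x) ^ 2)⁻¹ * φ x ∂ballMeasure N =
      lam * ∫ x, φ x / (1 - u x) ^ 2 ∂ballMeasure N := fun φ => by
    rw [← integral_const_mul]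
    simp only [div_eq_inv_mul, mul_assoc]
  obtain ⟨v, hv, hvU, hvsol⟩ := exists_integral_mul_biharm_eq_of_le hN
    ((hu.integrable_inv_sq hU hlt).const_mul lam)
    (Eventually.of_forall fun x => mul_nonneg hlam (inv_nonneg.2 (sq_nonneg _)))
    (MemLp.of_bound hUmeas (1 - α) hbd) fun φ hφ hφ0 => by
      rw [hrhs]
      exact (mul_le_mul_of_nonneg_left (integral_div_one_sub_sq_le hU.2.1 hlt
        (hu.ae_mem.mono fun x hx => hx.2) hφ.1.continuousOn hφ0) hlam).trans (hU.2.2 φ hφ hφ0)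
  refine ⟨fun x => Phi α β x + v x, ⟨(continuous_Phi α β).aestronglyMeasurable.add hv.1, ?_⟩,
    fun φ hφ => ?_⟩
  · filter_upwards [hvU] with x hx
    exact ⟨le_add_of_nonneg_right hx.1, le_sub_iff_add_le'.1 hx.2⟩
  · simp only [add_sub_cancel_left, hvsol φ hφ, hrhs]

lemma IsIterate.ae_le (hN : 0 < N) (hadm : Admissible α β) (hlam : 0 ≤ lam)
    (hU : IsWeakSuperSolutionAB N lam α β U) (hlt : ∀ᵐ x ∂ballMeasure N, U x < 1)
    (hu₂ : IsBetween α β U u₂) (hv₁ : IsBetween α β U v₁) (hv₂ : IsBetween α β U v₂)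
    (h₁ : IsIterate lam α β u₁ v₁) (h₂ : IsIterate lam α β u₂ v₂)
    (hle : ∀ᵐ x ∂ballMeasure N, u₁ x ≤ u₂ x) : ∀ᵐ x ∂ballMeasure N, v₁ x ≤ v₂ x := by
  have hu₂lt : ∀ᵐ x ∂ballMeasure N, u₂ x < 1 := by
    filter_upwards [hu₂.ae_mem, hlt] with x hx hUx
    exact hx.2.trans_lt hUx
  have hsub := ae_le_of_forall_integral_mul_biharm_le hN
    (integrable_sub_Phi hadm hv₁.aestronglyMeasurable (hv₁.ae_bounds hadm hU))
    (integrable_sub_Phi hadm hv₂.aestronglyMeasurable (hv₂.ae_bounds hadm hU))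
    fun φ hφ hφ0 => by
      rw [h₁ φ hφ, h₂ φ hφ]
      exact mul_le_mul_of_nonneg_left (integral_div_one_sub_sq_le
        (hu₂.integrable_inv_sq hU hlt) hu₂lt hle hφ.1.continuousOn hφ0) hlam
  exact hsub.mono fun x hx => (sub_le_sub_iff_right _).1 hx

lemma exists_monotone_isIterate (hN : 0 < N) (hadm : Admissible α β) (hlam : 0 ≤ lam)
    (hU : IsWeakSuperSolutionAB N lam α β U) (hlt : ∀ᵐ x ∂ballMeasure N, U x < 1) :
    ∃ s : ℕ → ℝ^N → ℝ, (∀ n, IsBetween α β U (s n)) ∧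
      (∀ n, IsIterate lam α β (s n) (s (n + 1))) ∧
      ∀ᵐ x ∂ballMeasure N, Monotone fun n => s n x := by
  choose! T hT hTs using fun u (hu : IsBetween α β U u) =>
    hu.exists_isIterate hN hadm hlam hU hlt
  have hsucc : ∀ n, T^[n + 1] (Phi α β) = T (T^[n] (Phi α β)) := fun n =>
    Function.iterate_succ_apply' _ _ _
  have hbetween : ∀ n, IsBetween α β U (T^[n] (Phi α β)) := fun n => by
    induction n with
    | zero =>
      exact ⟨(continuous_Phi α β).aestronglyMeasurable,
        (hU.ae_Phi_le hN hadm hlam).mono fun x hx => ⟨le_rfl, hx⟩⟩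
    | succ n ih => rw [hsucc]; exact hT _ ih
  have hiter : ∀ n, IsIterate lam α β (T^[n] (Phi α β)) (T^[n + 1] (Phi α β)) := fun n => by
    rw [hsucc]
    exact hTs _ (hbetween n)
  have hmono : ∀ n, ∀ᵐ x ∂ballMeasure N, T^[n] (Phi α β) x ≤ T^[n + 1] (Phi α β) x := fun n => by
    induction n with
    | zero => exact (hbetween 1).ae_mem.mono fun x hx => hx.1
    | succ n ih =>
      exact (hiter n).ae_le hN hadm hlam hU hlt (hbetween _) (hbetween _) (hbetween _)
        (hiter (n + 1)) ih
  exact ⟨fun n => T^[n] (Phi α β), hbetween, hiter,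
    (ae_all_iff.2 hmono).mono fun x hx => monotone_nat_of_le_succ hx⟩

lemma IsBetween.of_tendsto (hs : ∀ n, IsBetween α β U (s n))
    (hlim : ∀ᵐ x ∂ballMeasure N, Tendsto (fun n => s n x) atTop (nhds (u x))) :
    IsBetween α β U u := by
  refine ⟨aestronglyMeasurable_of_tendsto_ae atTop (fun n => (hs n).aestronglyMeasurable) hlim, ?_⟩
  filter_upwards [hlim, ae_all_iff.2 fun n => (hs n).ae_mem] with x hx hsx
  exact isClosed_Icc.mem_of_tendsto hx (Eventually.of_forall hsx)

lemma tendsto_integral_sub_Phi_mul_biharm (hadm : Admissible α β)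
    (hU : IsWeakSuperSolutionAB N lam α β U) (hs : ∀ n, IsBetween α β U (s n))
    (hlim : ∀ᵐ x ∂ballMeasure N, Tendsto (fun n => s n x) atTop (nhds (u x)))
    (hφ : IsTest N φ) :
    Tendsto (fun n => ∫ x, (s n x - Phi α β x) * biharm φ x ∂ballMeasure N) atTop
      (nhds (∫ x, (u x - Phi α β x) * biharm φ x ∂ballMeasure N)) := by
  refine tendsto_integral_of_dominated_convergence (fun x => |(1 - α) * biharm φ x|)
    (fun n => (hφ.integrable_mul_biharm (integrable_sub_Phi hadm (hs n).aestronglyMeasurable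
      ((hs n).ae_bounds hadm hU))).1)
    (hφ.integrable_mul_biharm (integrable_const _)).abs (fun n => ?_) ?_
  · filter_upwards [(hs n).ae_bounds hadm hU, ae_restrict_mem measurableSet_ball] with x hx hxB
    rw [norm_mul, abs_mul]
    exact mul_le_mul_of_nonneg_right
      ((abs_sub_Phi_le hadm hxB hx.1 hx.2).trans (le_abs_self _)) (norm_nonneg _)
  · filter_upwards [hlim] with x hx
    exact (hx.sub_const _).mul_const _

lemma tendsto_integral_div_one_sub_sq (hU : IsWeakSuperSolutionAB N lam α β U)
    (hlt : ∀ᵐ x ∂ballMeasure N, U x < 1) (hs : ∀ n, IsBetween α β U (s n))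
    (hlim : ∀ᵐ x ∂ballMeasure N, Tendsto (fun n => s n x) atTop (nhds (u x)))
    (hφ : ContinuousOn φ (closedBall 0 1)) :
    Tendsto (fun n => ∫ x, φ x / (1 - s n x) ^ 2 ∂ballMeasure N) atTop
      (nhds (∫ x, φ x / (1 - u x) ^ 2 ∂ballMeasure N)) := by
  refine tendsto_integral_of_dominated_convergence (fun x => |φ x| / (1 - U x) ^ 2)
    (fun n => (integrable_div_one_sub_sq ((hs n).integrable_inv_sq hU hlt) hφ).1)
    (integrable_div_one_sub_sq hU.2.1 hφ.abs) (fun n => ?_) ?_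
  · filter_upwards [(hs n).ae_mem, hlt] with x hx hUx
    rw [norm_div, Real.norm_of_nonneg (sq_nonneg (1 - s n x))]
    exact div_one_sub_sq_le hx.2 hUx (norm_nonneg _)
  · filter_upwards [hlim, hlt, (IsBetween.of_tendsto hs hlim).ae_mem] with x hx hUx hux
    exact tendsto_const_nhds.div ((hx.const_sub 1).pow 2)
      (pow_ne_zero 2 (sub_pos.2 (hux.2.trans_lt hUx)).ne')

theorem IsWeakSuperSolutionAB.exists_isWeakSolutionAB (hN : 0 < N) (hadm : Admissible α β)
    (hlam : 0 ≤ lam) (hU : IsWeakSuperSolutionAB N lam α β U)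
    (hlt : ∀ᵐ x ∂ballMeasure N, U x < 1) :
    ∃ u, IsWeakSolutionAB N lam α β u ∧ ∀ᵐ x ∂ballMeasure N, α ≤ u x ∧ u x ≤ U x := by
  obtain ⟨s, hs, hiter, hmono⟩ := exists_monotone_isIterate hN hadm hlam hU hlt
  have hlim : ∀ᵐ x ∂ballMeasure N, Tendsto (fun n => s n x) atTop (nhds (⨆ n, s n x)) := by
    filter_upwards [hmono, ae_all_iff.2 fun n => (hs n).ae_mem] with x hx hsx
    exact tendsto_atTop_ciSup hx ⟨U x, forall_mem_range.2 fun n => (hsx n).2⟩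
  have hu := IsBetween.of_tendsto hs hlim
  refine ⟨_, ⟨hu.ae_bounds hadm hU, hu.integrable_inv_sq hU hlt, fun φ hφ => ?_⟩, ?_⟩
  · refine tendsto_nhds_unique (tendsto_integral_sub_Phi_mul_biharm hadm hU
      (fun n => hs (n + 1)) (hlim.mono fun x hx => hx.comp (tendsto_add_atTop_nat 1)) hφ) ?_
    simp only [hiter _ φ hφ]
    exact (tendsto_integral_div_one_sub_sq hU hlt hs hlim hφ.1.continuousOn).const_mul lam
  · filter_upwards [hu.ae_bounds hadm hU, hu.ae_mem] with x hx hux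
    exact ⟨hx.1, hux.2⟩

end MonotoneIteration

/-! ### Truncated powers and bumps on balls -/

section TruncatedPower

variable {m : ℕ} {t : ℝ}

/-- The truncated power `t₊ᵐ`. -/
noncomputable def truncPow (m : ℕ) (t : ℝ) : ℝ := max t 0 ^ m

lemma truncPow_nonneg (m : ℕ) (t : ℝ) : 0 ≤ truncPow m t := pow_nonneg (le_max_right _ _) m

lemma truncPow_of_nonneg (h : 0 ≤ t) : truncPow m t = t ^ m := by rw [truncPow, max_eq_left h]

lemma truncPow_of_nonpos (h : t ≤ 0) : truncPow (m + 1) t = 0 := by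
  rw [truncPow, max_eq_right h, zero_pow m.succ_ne_zero]

lemma mul_truncPow (m : ℕ) (t : ℝ) : t * truncPow (m + 1) t = truncPow (m + 2) t := by
  rcases le_total 0 t with h | h
  · rw [truncPow_of_nonneg h, truncPow_of_nonneg h]; ring
  · rw [truncPow_of_nonpos h, truncPow_of_nonpos h, mul_zero]

lemma mul_truncPow_eq {c : ℝ} (hc : 0 ≤ c) (m : ℕ) (t : ℝ) :
    truncPow m (c * t) = c ^ m * truncPow m t := by
  rw [truncPow, truncPow, ← mul_pow, mul_max_of_nonneg _ _ hc, mul_zero]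

lemma continuous_truncPow (m : ℕ) : Continuous (truncPow m) := by unfold truncPow; fun_prop

lemma monotone_truncPow (m : ℕ) : Monotone (truncPow m) := fun _ _ h =>
  pow_le_pow_left₀ (le_max_right _ _) (max_le_max_right _ h) m

lemma hasDerivAt_truncPow (m : ℕ) (t : ℝ) :
    HasDerivAt (truncPow (m + 2)) ((m + 2) * truncPow (m + 1) t) t := by
  have hpow : HasDerivAt (fun s : ℝ => s ^ (m + 2)) ((m + 2) * t ^ (m + 1)) t := by
    simpa using hasDerivAt_pow (m + 2) t
  rcases lt_trichotomy t 0 with h | rfl | h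
  · rw [truncPow_of_nonpos h.le, mul_zero]
    refine (hasDerivAt_const t (0 : ℝ)).congr_of_eventuallyEq ?_
    filter_upwards [Iio_mem_nhds h] with s hs using truncPow_of_nonpos (le_of_lt hs)
  · have hleft : HasDerivWithinAt (truncPow (m + 2)) 0 (Iic 0) 0 :=
      (hasDerivWithinAt_const 0 (Iic 0) (0 : ℝ)).congr (fun s hs => truncPow_of_nonpos hs)
        (truncPow_of_nonpos le_rfl)
    have hright : HasDerivWithinAt (truncPow (m + 2)) 0 (Ici 0) 0 := by
      have := hpow.hasDerivWithinAt (s := Ici 0)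
      rw [zero_pow m.succ_ne_zero, mul_zero] at this
      exact this.congr (fun s hs => truncPow_of_nonneg hs) (truncPow_of_nonneg le_rfl)
    rw [truncPow_of_nonpos le_rfl, mul_zero, ← hasDerivWithinAt_univ, ← Iic_union_Ici (a := 0)]
    exact hleft.union hright
  · rw [truncPow_of_nonneg h.le]
    refine hpow.congr_of_eventuallyEq ?_
    filter_upwards [Ioi_mem_nhds h] with s hs using truncPow_of_nonneg (le_of_lt hs)

lemma contDiff_truncPow (n : ℕ) : ContDiff ℝ n (truncPow (n + 1)) := by
  induction n with
  | zero => exact contDiff_zero.2 (continuous_truncPow _)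
  | succ n ih =>
    have hderiv : deriv (truncPow (n + 1 + 1)) = fun t => ((n : ℝ) + 2) * truncPow (n + 1) t :=
      funext fun t => (hasDerivAt_truncPow n t).deriv
    rw [Nat.cast_add, Nat.cast_one, contDiff_succ_iff_deriv, hderiv]
    exact ⟨fun t => (hasDerivAt_truncPow n t).differentiableAt, by simp, contDiff_const.mul ih⟩

end TruncatedPower

section BallBump

variable {N : ℕ} {q : ℝ} {x y : ℝ^N}

/-- The bump `y ↦ (q - |x-y|²)₊ᵐ`, supported in the ball of centre `x` and radius `√q`. It is
parametrised by the squared radius because its averages are concave in that variable. -/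
noncomputable def ballBump (m : ℕ) (q : ℝ) (x y : ℝ^N) : ℝ := truncPow m (q - ‖x - y‖ ^ 2)

lemma ballBump_nonneg (m : ℕ) (q : ℝ) (x y : ℝ^N) : 0 ≤ ballBump m q x y := truncPow_nonneg _ _

lemma ballBump_le (m : ℕ) (q : ℝ) (x y : ℝ^N) : ballBump m q x y ≤ truncPow m q :=
  monotone_truncPow m (sub_le_self _ (sq_nonneg _))

lemma ballBump_eq_zero {m : ℕ} (h : q ≤ ‖x - y‖ ^ 2) : ballBump (m + 1) q x y = 0 :=
  truncPow_of_nonpos (sub_nonpos.2 h)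

lemma mul_ballBump (m : ℕ) (q : ℝ) (x y : ℝ^N) :
    (q - ‖x - y‖ ^ 2) * ballBump (m + 1) q x y = ballBump (m + 2) q x y := mul_truncPow m _

lemma continuous_ballBump (m : ℕ) (q : ℝ) (x : ℝ^N) : Continuous (ballBump m q x) :=
  (continuous_truncPow m).comp (by fun_prop)

lemma support_ballBump_subset (m : ℕ) (q : ℝ) (x : ℝ^N) :
    Function.support (ballBump (m + 1) q x) ⊆ closedBall x (√q) := fun y hy => by
  by_contra hout
  have hlt : √q < ‖x - y‖ := by
    rw [← dist_eq_norm, dist_comm]; simpa using hout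
  exact hy (ballBump_eq_zero (Real.lt_sq_of_sqrt_lt hlt).le)

lemma hasCompactSupport_ballBump (m : ℕ) (q : ℝ) (x : ℝ^N) :
    HasCompactSupport (ballBump (m + 1) q x) :=
  .of_support_subset_isCompact (isCompact_closedBall _ _) (support_ballBump_subset m q x)

lemma contDiff_ballBump (n : ℕ) (q : ℝ) (x : ℝ^N) : ContDiff ℝ n (ballBump (n + 1) q x) :=
  (contDiff_truncPow n).comp (contDiff_const.sub ((contDiff_const.sub contDiff_id).norm_sq ℝ))

lemma pderiv_ballBump (m : ℕ) (q : ℝ) (x y : ℝ^N) (i : Fin N) :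
    pderiv i (ballBump (m + 2) q x) y = 2 * (m + 2) * ((x i - y i) * ballBump (m + 1) q x y) := by
  have hsq : HasFDerivAt (fun y : ℝ^N => q - ‖x - y‖ ^ 2) _ y :=
    (((hasFDerivAt_id y).const_sub x).norm_sq).const_sub q
  have hcomp : HasFDerivAt (ballBump (m + 2) q x) _ y :=
    (hasDerivAt_truncPow m _).comp_hasFDerivAt y hsq
  rw [pderiv, hcomp.fderiv, ballBump]
  simp [EuclideanSpace.inner_single_right]
  ring

lemma lap_ballBump (m : ℕ) (q : ℝ) (x y : ℝ^N) :
    lap (ballBump (m + 3) q x) y = 4 * (m + 3) * (m + 2) * q * ballBump (m + 1) q x y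
      + -(4 * (m + 3) * (m + 2) + 2 * N * (m + 3)) * ballBump (m + 2) q x y := by
  have hd : DifferentiableAt ℝ (ballBump (m + 2) q x) y :=
    (contDiff_ballBump (m + 1) q x).differentiable (by simp) y
  have hc : ∀ i : Fin N, DifferentiableAt ℝ (fun y : ℝ^N => x i - y i) y := fun i => by fun_prop
  have hpc : ∀ i : Fin N, pderiv i (fun y : ℝ^N => x i - y i) y = -1 := fun i => by
    rw [pderiv, fderiv_const_sub, neg_apply, ← pderiv, pderiv_coord, if_pos rfl]
  have hsecond : ∀ i : Fin N, pderiv i (pderiv i (ballBump (m + 3) q x)) y =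
      4 * (m + 3) * (m + 2) * ballBump (m + 1) q x y * (x - y) i ^ 2
        - 2 * (m + 3) * ballBump (m + 2) q x y := fun i => by
    have : pderiv i (ballBump (m + 3) q x) =
        fun y => 2 * ((m : ℝ) + 3) * ((x i - y i) * ballBump (m + 2) q x y) := by
      ext y; rw [pderiv_ballBump (m + 1)]; push_cast; ring
    rw [this, pderiv_const_mul _ ((hc i).fun_mul hd), pderiv_mul (hc i) hd, pderiv_ballBump, hpc,
      PiLp.sub_apply]
    ring
  rw [lap_apply, Finset.sum_congr rfl fun i _ => hsecond i, Finset.sum_sub_distrib,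
    ← Finset.mul_sum, ← EuclideanSpace.real_norm_sq_eq, ← mul_ballBump]
  simp only [Finset.sum_const, Finset.card_univ, Fintype.card_fin, nsmul_eq_mul]
  ring

lemma biharm_ballBump (q : ℝ) (x y : ℝ^N) :
    biharm (ballBump 5 q x) y = 1920 * q ^ 2 * ballBump 1 q x y
      - 960 * (N + 6) * q * ballBump 2 q x y + 80 * (N + 8) * (N + 6) * ballBump 3 q x y := by
  have hlap : lap (ballBump 5 q x) = fun y : ℝ^N => 80 * q * ballBump 3 q x y
      + -(80 + 10 * N) * ballBump 4 q x y := by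
    ext y; rw [lap_ballBump 2]; push_cast; ring
  have h3 : ContDiffOn ℝ 2 (ballBump 3 q x) univ :=
    (by exact_mod_cast contDiff_ballBump 2 q x : ContDiff ℝ 2 (ballBump 3 q x)).contDiffOn
  have h4 : ContDiffOn ℝ 2 (ballBump 4 q x) univ :=
    ((contDiff_ballBump 3 q x).of_le (by norm_num)).contDiffOn
  rw [biharm, hlap, lap_add isOpen_univ (contDiffOn_const.mul h3) (contDiffOn_const.mul h4)
    (mem_univ y)]
  simp only [lap_const_mul isOpen_univ _ h3 (mem_univ y),
    lap_const_mul isOpen_univ _ h4 (mem_univ y), lap_ballBump 0, lap_ballBump 1]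
  push_cast
  ring

lemma ballBump_eq_zero_of_one_le_norm (hx : x ∈ ball (0 : ℝ^N) 1) (hq : q < (1 - ‖x‖) ^ 2)
    (hy : 1 ≤ ‖y‖) (m : ℕ) : ballBump (m + 1) q x y = 0 := by
  rw [mem_ball_zero_iff] at hx
  have hdist : 1 - ‖x‖ ≤ ‖x - y‖ := by
    rw [norm_sub_rev]; linarith [norm_sub_norm_le y x]
  exact ballBump_eq_zero (hq.le.trans (pow_le_pow_left₀ (by linarith) hdist 2))

lemma isTest_ballBump (hx : x ∈ ball (0 : ℝ^N) 1) (hq : q < (1 - ‖x‖) ^ 2) :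
    IsTest N (ballBump 5 q x) := by
  have hsmooth : ContDiff ℝ 4 (ballBump 5 q x) := contDiff_ballBump 4 q x
  have hzero : ∀ y : ℝ^N, ‖y‖ = 1 → ballBump 5 q x y = 0 := fun y hy =>
    ballBump_eq_zero_of_one_le_norm hx hq hy.ge 4
  refine ⟨hsmooth.contDiffOn, hzero, fun y hy => ?_⟩
  rw [(hsmooth.differentiable (by norm_num) y).fderivWithin
    (uniqueDiffOn_closedBall y (by simp [hy]))]
  have hmin : IsLocalMin (ballBump 5 q x) y := Eventually.of_forall fun w => by
    rw [hzero y hy]; exact ballBump_nonneg 5 q x w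
  exact hmin.fderiv_eq_zero

end BallBump

/-! ### Green's identity -/

section Green

variable {N : ℕ} {f g : ℝ^N → ℝ}

lemma integral_mul_pderiv (hf : ContDiff ℝ 1 f) (hg : ContDiff ℝ 1 g) (hc : HasCompactSupport g)
    (i : Fin N) : ∫ x, f x * pderiv i g x = -∫ x, pderiv i f x * g x := by
  have hf' : Continuous (pderiv i f) :=
    (hf.continuous_fderiv one_ne_zero).clm_apply continuous_const
  have hg' : Continuous (pderiv i g) :=
    (hg.continuous_fderiv one_ne_zero).clm_apply continuous_const
  exact integral_mul_fderiv_eq_neg_fderiv_mul_of_integrable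
    ((hf'.mul hg.continuous).integrable_of_hasCompactSupport hc.mul_left)
    ((hf.continuous.mul hg').integrable_of_hasCompactSupport (hc.fderiv_apply (𝕜 := ℝ) _).mul_left)
    ((hf.continuous.mul hg.continuous).integrable_of_hasCompactSupport hc.mul_left)
    (fun x _ => hf.differentiable one_ne_zero x) (fun x _ => hg.differentiable one_ne_zero x)

lemma contDiff_pderiv (hf : ContDiff ℝ 2 f) (i : Fin N) : ContDiff ℝ 1 (pderiv i f) :=
  contDiffOn_univ.1 (pderiv_contDiffOn isOpen_univ hf.contDiffOn (by norm_num) i)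

lemma integral_mul_lap (hf : ContDiff ℝ 2 f) (hg : ContDiff ℝ 2 g) (hc : HasCompactSupport g) :
    ∫ x, f x * lap g x = ∫ x, lap f x * g x := by
  have hc' : ∀ i, HasCompactSupport (pderiv i g) := fun i => hc.fderiv_apply (𝕜 := ℝ) _
  have hc'' : ∀ i, HasCompactSupport (pderiv i (pderiv i g)) := fun i =>
    (hc' i).fderiv_apply (𝕜 := ℝ) _
  have hcont : ∀ {h : ℝ^N → ℝ}, ContDiff ℝ 2 h → ∀ i, Continuous (pderiv i (pderiv i h)) :=
    fun hh i => ((contDiff_pderiv hh i).continuous_fderiv one_ne_zero).clm_apply continuous_const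
  have hfg'' : ∀ i, Integrable fun x => f x * pderiv i (pderiv i g) x := fun i =>
    (hf.continuous.mul (hcont hg i)).integrable_of_hasCompactSupport (hc'' i).mul_left
  have hf''g : ∀ i, Integrable fun x => pderiv i (pderiv i f) x * g x := fun i =>
    ((hcont hf i).mul hg.continuous).integrable_of_hasCompactSupport hc.mul_left
  simp only [lap_apply, Finset.mul_sum, Finset.sum_mul]
  rw [integral_finsetSum _ fun i _ => hfg'' i, integral_finsetSum _ fun i _ => hf''g i]
  refine Finset.sum_congr rfl fun i _ => ?_
  rw [integral_mul_pderiv (hf.of_le (by norm_num)) (contDiff_pderiv hg i) (hc' i),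
    integral_mul_pderiv (contDiff_pderiv hf i) (hg.of_le (by norm_num)) hc, neg_neg]

lemma lap_const (c : ℝ) (x : ℝ^N) : lap (fun _ => c) x = 0 :=
  Finset.sum_eq_zero fun i _ => by simp

lemma hasCompactSupport_lap (hc : HasCompactSupport g) : HasCompactSupport (lap g) :=
  .intro hc fun x hx => by
    have hzero : EqOn g (fun _ => 0) (tsupport g)ᶜ := fun y hy =>
      image_eq_zero_of_notMem_tsupport hy
    rw [lap_congr (isClosed_tsupport g).isOpen_compl hzero hx, lap_const]

lemma integral_lap_eq_zero (hg : ContDiff ℝ 2 g) (hc : HasCompactSupport g) :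
    ∫ x, lap g x = 0 := by
  simpa [lap_const] using integral_mul_lap (contDiff_const (c := (1 : ℝ))) hg hc

lemma integral_one_sub_Phi_mul_biharm (α β : ℝ) (hg : ContDiff ℝ 4 g) (hc : HasCompactSupport g) :
    ∫ x, (1 - Phi α β x) * biharm g x = 0 := by
  have hg2 : ContDiff ℝ 2 g := hg.of_le (by norm_num)
  have hlap : ContDiff ℝ 2 (lap g) :=
    contDiffOn_univ.1 (lap_contDiffOn isOpen_univ hg.contDiffOn (by norm_num))
  have hPhi : (fun x : ℝ^N => 1 - Phi α β x) = fun x => (1 - α) + β / 2 * rho x := by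
    ext x; simp only [Phi, rho]; ring
  have hlapPhi : ∀ x : ℝ^N, lap (fun x : ℝ^N => 1 - Phi α β x) x = -(N * β) := fun x => by
    rw [hPhi, lap_add isOpen_univ contDiffOn_const (contDiff_const.mul rho_contDiff).contDiffOn
      (mem_univ x)]
    simp only [lap_const, lap_const_mul isOpen_univ _ rho_contDiff.contDiffOn (mem_univ x), lap_rho]
    ring
  have hPhi2 : ContDiff ℝ 2 (fun x : ℝ^N => 1 - Phi α β x) := by
    rw [hPhi]; exact contDiff_const.add (contDiff_const.mul rho_contDiff)
  simp only [biharm]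
  rw [integral_mul_lap hPhi2 hlap (hasCompactSupport_lap hc)]
  simp only [hlapPhi, integral_const_mul, integral_lap_eq_zero hg2 hc, mul_zero]

end Green

/-! ### Weighted means over balls -/

section BumpMean

variable {N : ℕ} {z : ℝ^N → ℝ} {q : ℝ}

lemma ballBump_scale (hq : 0 < q) (m : ℕ) (x w : ℝ^N) :
    ballBump m q x (x + w) = q ^ m * ballBump m 1 0 ((√q)⁻¹ • w) := by
  have hw : q - ‖x - (x + w)‖ ^ 2 = q * (1 - ‖(0 : ℝ^N) - (√q)⁻¹ • w‖ ^ 2) := by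
    rw [sub_add_cancel_left, zero_sub, norm_neg, norm_neg, norm_smul, mul_pow, norm_inv,
      Real.norm_of_nonneg (Real.sqrt_nonneg q), inv_pow, Real.sq_sqrt hq.le]
    field_simp
  rw [ballBump, ballBump, hw, mul_truncPow_eq hq.le]

lemma integral_ballBump (hq : 0 < q) (m : ℕ) (x : ℝ^N) :
    ∫ y, ballBump m q x y = √q ^ N * q ^ m * ∫ w, ballBump m 1 (0 : ℝ^N) w := by
  rw [← integral_add_left_eq_self _ x]
  simp only [ballBump_scale hq, integral_const_mul]
  rw [Measure.integral_comp_inv_smul_of_nonneg volume _ (Real.sqrt_nonneg q),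
    finrank_euclideanSpace_fin, smul_eq_mul]
  ring

lemma integral_ballBump_one_pos (N m : ℕ) : 0 < ∫ w, ballBump (m + 1) 1 (0 : ℝ^N) w :=
  (continuous_ballBump _ _ _).integral_pos_of_hasCompactSupport_nonneg_nonzero
    (hasCompactSupport_ballBump _ _ _) (ballBump_nonneg _ _ _) (x := 0)
    (by simp [ballBump, truncPow])

lemma integral_ballBump_pos (hq : 0 < q) (m : ℕ) (x : ℝ^N) :
    0 < ∫ y, ballBump (m + 1) q x y := by
  rw [integral_ballBump hq]
  have := integral_ballBump_one_pos N m
  have := Real.sqrt_pos.2 hq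
  positivity

lemma integrable_mul_ballBump (hz : Integrable z) (m : ℕ) (q : ℝ) (x : ℝ^N) :
    Integrable fun y => z y * ballBump m q x y :=
  hz.mul_bdd (c := truncPow m q) (continuous_ballBump m q x).aestronglyMeasurable <|
    Eventually.of_forall fun y => by
      rw [Real.norm_of_nonneg (ballBump_nonneg _ _ _ _)]; exact ballBump_le _ _ _ _

/-- The moment `∫ z(y) (q - |x-y|²)₊ᵐ dy`. -/
noncomputable def bumpMoment (z : ℝ^N → ℝ) (m : ℕ) (x : ℝ^N) (q : ℝ) : ℝ :=
  ∫ y, z y * ballBump m q x y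

/-- The mean of `z` over the ball of centre `x` and radius `√q`, weighted by the cubic bump. -/
noncomputable def bumpMean (z : ℝ^N → ℝ) (x : ℝ^N) (q : ℝ) : ℝ :=
  bumpMoment z 3 x q / ∫ y, ballBump 3 q x y

lemma hasDerivAt_bumpMoment (hz : Integrable z) (m : ℕ) (x : ℝ^N) (q : ℝ) :
    HasDerivAt (bumpMoment z (m + 2) x) ((m + 2) * bumpMoment z (m + 1) x q) q := by
  have h := hasDerivAt_integral_of_dominated_loc_of_deriv_le (μ := volume)
    (F := fun q y => z y * ballBump (m + 2) q x y)
    (F' := fun q y => z y * ((m + 2) * ballBump (m + 1) q x y)) (x₀ := q) (s := Iio (q + 1))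
    (bound := fun y => |z y| * ((m + 2) * truncPow (m + 1) (q + 1)))
    (Iio_mem_nhds (by linarith))
    (Eventually.of_forall fun q => (integrable_mul_ballBump hz _ _ _).1)
    (integrable_mul_ballBump hz _ _ _)
    (hz.1.mul ((continuous_ballBump _ _ _).const_smul ((m : ℝ) + 2)).aestronglyMeasurable)
    (Eventually.of_forall fun y q' hq' => by
      rw [norm_mul, Real.norm_of_nonneg (mul_nonneg (by positivity) (ballBump_nonneg _ _ _ _)),
        Real.norm_eq_abs]
      gcongr
      exact (ballBump_le _ _ _ _).trans (monotone_truncPow _ (le_of_lt hq')))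
    (hz.abs.mul_const _)
    (Eventually.of_forall fun y q' _ => by
      have := (hasDerivAt_truncPow m (q' - ‖x - y‖ ^ 2)).comp q' ((hasDerivAt_id q').sub_const _)
      rw [mul_one] at this
      exact this.const_mul _)
  have hmoment : ∫ y, z y * ((m + 2) * ballBump (m + 1) q x y) =
      (m + 2) * bumpMoment z (m + 1) x q := by
    rw [bumpMoment, ← integral_const_mul]; exact integral_congr_ae (.of_forall fun y => by ring)
  exact hmoment ▸ h.2

lemma integral_mul_biharm_ballBump (hz : Integrable z) (x : ℝ^N) (q : ℝ) :
    ∫ y, z y * biharm (ballBump 5 q x) y = 1920 * q ^ 2 * bumpMoment z 1 x q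
      - 960 * (N + 6) * q * bumpMoment z 2 x q
      + 80 * (N + 8) * (N + 6) * bumpMoment z 3 x q := by
  have hi : ∀ (m : ℕ) (c : ℝ), Integrable fun y => c * (z y * ballBump m q x y) := fun m c =>
    (integrable_mul_ballBump hz m q x).const_mul c
  have hsub : Integrable fun y => 1920 * q ^ 2 * (z y * ballBump 1 q x y)
      - 960 * (N + 6) * q * (z y * ballBump 2 q x y) := (hi _ _).sub (hi _ _)
  simp only [bumpMoment, ← integral_const_mul]
  rw [← integral_sub (hi _ _) (hi _ _), ← integral_add hsub (hi _ _)]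
  exact integral_congr_ae (.of_forall fun y => by simp only [biharm_ballBump]; ring)

lemma bumpMean_eq_rpow_mul (z : ℝ^N → ℝ) (x : ℝ^N) (hq : 0 < q) :
    bumpMean z x q =
      (∫ w, ballBump 3 1 (0 : ℝ^N) w)⁻¹ * (q ^ (-((N : ℝ) / 2 + 3)) * bumpMoment z 3 x q) := by
  have hpow : q ^ (-((N : ℝ) / 2 + 3)) = (√q ^ N * q ^ 3)⁻¹ := by
    rw [Real.rpow_neg hq.le, Real.rpow_add hq, Real.sqrt_eq_rpow, ← Real.rpow_mul_natCast hq.le,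
      one_div_mul_eq_div]
    norm_cast
  rw [bumpMean, integral_ballBump hq, hpow, div_eq_mul_inv, mul_inv]
  ring

lemma exists_hasDerivAt_rpow_mul_bumpMoment (hz : Integrable z) (x : ℝ^N) :
    ∃ f' : ℝ → ℝ, ∀ q : ℝ, 0 < q →
      HasDerivAt (fun q => q ^ (-((N : ℝ) / 2 + 3)) * bumpMoment z 3 x q) (f' q) q ∧
      HasDerivAt f' (q ^ (-((N : ℝ) / 2 + 3) - 2) / 320 *
        ∫ y, z y * biharm (ballBump 5 q x) y) q := by
  set a : ℝ := (N : ℝ) / 2 + 3 with ha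
  refine ⟨fun q => -a * q ^ (-a - 1) * bumpMoment z 3 x q + q ^ (-a) * (3 * bumpMoment z 2 x q),
    fun q hq => ⟨?_, ?_⟩⟩
  · exact ((Real.hasDerivAt_rpow_const (p := -a) (Or.inl hq.ne')).mul
      (hasDerivAt_bumpMoment hz 1 x q)).congr_deriv (by norm_num)
  · have hfst := ((Real.hasDerivAt_rpow_const (p := -a - 1) (Or.inl hq.ne')).const_mul (-a)).mul
      (hasDerivAt_bumpMoment hz 1 x q)
    have hsnd := (Real.hasDerivAt_rpow_const (p := -a) (Or.inl hq.ne')).mul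
      ((hasDerivAt_bumpMoment hz 0 x q).const_mul 3)
    have hpow1 : q ^ (-a - 1) = q ^ (-a - 2) * q := by
      rw [← Real.rpow_add_one hq.ne']; congr 1; ring
    have hpow2 : q ^ (-a) = q ^ (-a - 2) * q ^ 2 := by
      rw [← Real.rpow_add_natCast hq.ne']; congr 1; push_cast; ring
    refine (hfst.add hsnd).congr_deriv ?_
    rw [integral_mul_biharm_ballBump hz, sub_sub, one_add_one_eq_two, hpow1, hpow2, ha]
    push_cast
    ring

lemma concaveOn_bumpMean (hz : Integrable z) (x : ℝ^N) {Q : ℝ}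
    (hbih : ∀ q ∈ Ioo 0 Q, ∫ y, z y * biharm (ballBump 5 q x) y ≤ 0) :
    ConcaveOn ℝ (Ioo 0 Q) (bumpMean z x) := by
  obtain ⟨f', hf'⟩ := exists_hasDerivAt_rpow_mul_bumpMoment hz x
  have hconc : ConcaveOn ℝ (Ioo 0 Q)
      (fun q => q ^ (-((N : ℝ) / 2 + 3)) * bumpMoment z 3 x q) := by
    refine concaveOn_of_hasDerivWithinAt2_nonpos (convex_Ioo 0 Q)
      (f' := f') (fun q hq => (hf' q hq.1).1.continuousAt.continuousWithinAt) ?_ ?_ ?_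
      (f'' := fun q => q ^ (-((N : ℝ) / 2 + 3) - 2) / 320 * ∫ y, z y * biharm (ballBump 5 q x) y)
    all_goals rw [interior_Ioo]
    · exact fun q hq => (hf' q hq.1).1.hasDerivWithinAt
    · exact fun q hq => (hf' q hq.1).2.hasDerivWithinAt
    · exact fun q hq => mul_nonpos_of_nonneg_of_nonpos
        (div_nonneg (Real.rpow_nonneg hq.1.le _) (by norm_num)) (hbih q hq)
  refine (hconc.smul (inv_nonneg.2 (integral_ballBump_one_pos N 2).le)).congr fun q hq => ?_
  exact (bumpMean_eq_rpow_mul z x hq.1).symm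

lemma volume_real_closedBall_sqrt (x : ℝ^N) (q : ℝ) :
    volume.real (closedBall x (√q)) = √q ^ N * volume.real (closedBall (0 : ℝ^N) 1) := by
  rw [Measure.real, Measure.addHaar_closedBall' _ x (Real.sqrt_nonneg q), ENNReal.toReal_mul,
    ENNReal.toReal_ofReal (by positivity), finrank_euclideanSpace_fin, ← Measure.real]

lemma exists_forall_ballBump_div_integral_le (N : ℕ) :
    ∃ C, ∀ q > 0, ∀ x y : ℝ^N,
      ballBump 3 q x y / ∫ y, ballBump 3 q x y ≤ C / volume.real (closedBall x (√q)) := by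
  refine ⟨volume.real (closedBall (0 : ℝ^N) 1) / ∫ w, ballBump 3 1 (0 : ℝ^N) w,
    fun q hq x y => ?_⟩
  have hmass := integral_ballBump_one_pos N 2
  have hvol : 0 < volume.real (closedBall (0 : ℝ^N) 1) :=
    ENNReal.toReal_pos (measure_closedBall_pos _ _ one_pos).ne' measure_closedBall_lt_top.ne
  have hle : ballBump 3 q x y ≤ q ^ 3 := (ballBump_le 3 q x y).trans_eq (truncPow_of_nonneg hq.le)
  rw [integral_ballBump hq, volume_real_closedBall_sqrt, div_div,
    div_le_div_iff₀ (by positivity) (by positivity)]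
  calc _ ≤ q ^ 3 * _ := mul_le_mul_of_nonneg_right hle (by positivity)
    _ = _ := by ring

lemma ae_tendsto_bumpMean (hz : Integrable z) :
    ∀ᵐ x, Tendsto (bumpMean z x) (nhdsWithin 0 (Ioi 0)) (nhds (z x)) := by
  obtain ⟨C, hC⟩ := exists_forall_ballBump_div_integral_le N
  filter_upwards [IsUnifLocDoublingMeasure.ae_tendsto_average_norm_sub volume
    hz.locallyIntegrable 1] with x hx
  have hpos : ∀ᶠ q : ℝ in nhdsWithin 0 (Ioi 0), 0 < q := self_mem_nhdsWithin
  have hsqrt : Tendsto Real.sqrt (nhdsWithin 0 (Ioi 0)) (nhdsWithin 0 (Ioi 0)) :=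
    tendsto_nhdsWithin_iff.2 ⟨by
      simpa using Real.continuous_sqrt.continuousWithinAt (s := Ioi 0) (x := 0) |>.tendsto,
      hpos.mono fun q => Real.sqrt_pos.2⟩
  have havg := hx (fun _ => x) Real.sqrt hsqrt (.of_forall fun q =>
    mem_closedBall_self (by positivity))
  have hlim := tendsto_integral_smul_of_tendsto_average_norm_sub C havg
    (g := fun q y => ballBump 3 q x y / ∫ y, ballBump 3 q x y)
    (.of_forall fun q => hz.integrableOn) ?_ ?_ ?_
  · refine hlim.congr fun q => ?_
    rw [bumpMean, bumpMoment, ← integral_div]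
    exact integral_congr_ae (.of_forall fun y => by simp only [smul_eq_mul]; ring)
  · refine tendsto_const_nhds.congr' (hpos.mono fun q hq => ?_)
    simp only [integral_div, div_self (integral_ballBump_pos hq 2 x).ne']
  · refine .of_forall fun q y hy => support_ballBump_subset 2 q x fun h => hy ?_
    simp [h]
  · refine hpos.mono fun q hq y => ?_
    rw [abs_of_nonneg (div_nonneg (ballBump_nonneg _ _ _ _) (integral_ballBump_pos hq 2 x).le)]
    exact hC q hq x y

end BumpMean

/-! ### The strong minimum principle -/

section ConcaveOnIoo

variable {f : ℝ → ℝ} {Q a b c : ℝ}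

lemma sub_mul_add_sub_mul_le_of_concaveOn {s : Set ℝ} (hf : ConcaveOn ℝ s f) (ha : a ∈ s)
    (hc : c ∈ s) (hab : a < b) (hbc : b < c) :
    (c - b) * f a + (b - a) * f c ≤ (c - a) * f b := by
  have := hf.slope_anti_adjacent ha hc hab hbc
  rw [div_le_div_iff₀ (sub_pos.2 hbc) (sub_pos.2 hab)] at this
  linarith

lemma mul_le_mul_of_concaveOn_of_nonneg (hf : ConcaveOn ℝ (Ioo 0 Q) f)
    (h0 : ∀ t, 0 < t → 0 ≤ f t) (ha : 0 < a) (hab : a < b) (hb : b < Q) :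
    a * f b ≤ b * f a := by
  have hsub : ∀ ε ∈ Ioo 0 a, (a - ε) * f b ≤ (b - ε) * f a := fun ε hε => by
    have hthree := sub_mul_add_sub_mul_le_of_concaveOn hf ⟨hε.1, by linarith [hε.2]⟩
      ⟨by linarith, hb⟩ hε.2 hab
    linarith [mul_nonneg (sub_nonneg.2 hab.le) (h0 ε hε.1)]
  have hlim : ∀ s : ℝ, ∀ t : ℝ, Tendsto (fun ε => (s - ε) * t) (nhdsWithin 0 (Ioi 0))
      (nhds (s * t)) := fun s t => by
    have : Continuous fun ε => (s - ε) * t := by fun_prop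
    simpa using (this.tendsto 0).mono_left nhdsWithin_le_nhds
  exact le_of_tendsto_of_tendsto (hlim a _) (hlim b _)
    (by filter_upwards [Ioo_mem_nhdsGT ha] with ε hε using hsub ε hε)

lemma le_two_mul_of_concaveOn_of_tendsto {L : ℝ} (hf : ConcaveOn ℝ (Ioo 0 Q) f)
    (h0 : ∀ t, 0 < t → 0 ≤ f t) (hL : Tendsto f (nhdsWithin 0 (Ioi 0)) (nhds L))
    (ha : 0 < a) (haQ : 2 * a < Q) : L ≤ 2 * f a := by
  refine le_of_tendsto hL ?_
  filter_upwards [Ioo_mem_nhdsGT ha] with ε hε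
  have hthree := sub_mul_add_sub_mul_le_of_concaveOn hf (c := 2 * a)
    ⟨hε.1, by linarith [hε.2]⟩ ⟨by linarith, haQ⟩ hε.2 (by linarith)
  have h2a := mul_nonneg (sub_nonneg.2 hε.2.le) (h0 (2 * a) (by linarith))
  have hεa := mul_nonneg hε.1.le (h0 a ha)
  refine le_of_mul_le_mul_left ?_ ha
  linarith

end ConcaveOnIoo

section StrongMinimumPrinciple

variable {N : ℕ} {z : ℝ^N → ℝ} {q : ℝ} {x y : ℝ^N}

lemma bumpMean_nonneg (h0 : 0 ≤ᵐ[volume] z) (x : ℝ^N) (q : ℝ) : 0 ≤ bumpMean z x q :=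
  div_nonneg (integral_nonneg_of_ae (h0.mono fun _ hy => mul_nonneg hy (ballBump_nonneg _ _ _ _)))
    (integral_nonneg (ballBump_nonneg _ _ _))

lemma bumpMean_le_of_norm_sub_le (hz : Integrable z) (h0 : 0 ≤ᵐ[volume] z) (hq : 0 < q)
    (hxy : ‖x - y‖ ≤ √q) : bumpMean z y q ≤ 3 ^ N * 729 * bumpMean z x (9 * q) := by
  have hbump : ∀ w, ballBump 3 q y w ≤ ballBump 3 (9 * q) x w := fun w => by
    rcases le_total q (‖y - w‖ ^ 2) with hw | hw
    · rw [ballBump_eq_zero hw]; exact ballBump_nonneg _ _ _ _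
    · have hdist : ‖x - w‖ ≤ √q + √q := by
        rw [← sub_add_sub_cancel x y w]
        exact (norm_add_le _ _).trans (add_le_add hxy (Real.le_sqrt_of_sq_le hw))
      have hsq : ‖x - w‖ ^ 2 ≤ 4 * q := by
        calc _ ≤ (√q + √q) ^ 2 := pow_le_pow_left₀ (norm_nonneg _) hdist 2
          _ = 4 * √q ^ 2 := by ring
          _ = 4 * q := by rw [Real.sq_sqrt hq.le]
      exact monotone_truncPow 3 (by linarith [sq_nonneg ‖y - w‖])
  have hmoment : bumpMoment z 3 y q ≤ bumpMoment z 3 x (9 * q) :=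
    integral_mono_ae (integrable_mul_ballBump hz _ _ _) (integrable_mul_ballBump hz _ _ _)
      (h0.mono fun w hw => mul_le_mul_of_nonneg_left (hbump w) hw)
  have hmass : ∫ w, ballBump 3 (9 * q) x w = 3 ^ N * 729 * ∫ w, ballBump 3 q y w := by
    rw [integral_ballBump (by positivity), integral_ballBump hq,
      Real.sqrt_mul (by norm_num), show (9 : ℝ) = 3 ^ 2 by norm_num, Real.sqrt_sq (by norm_num)]
    ring
  have hpos := integral_ballBump_pos hq 2 y
  rw [bumpMean, bumpMean, hmass, ← mul_div_assoc, mul_div_mul_left _ _ (by positivity)]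
  gcongr

/-- The weighted means of `z` over balls inside the unit ball are concave in the squared radius.
For `z = 1 - u` this is how the super-solution property of `u` enters. -/
def IsConcaveInMean (z : ℝ^N → ℝ) : Prop :=
  ∀ x ∈ ball (0 : ℝ^N) 1, ConcaveOn ℝ (Ioo 0 ((1 - ‖x‖) ^ 2)) (bumpMean z x)

lemma IsConcaveInMean.ae_le_bumpMean (hc : IsConcaveInMean z) (hz : Integrable z)
    (h0 : 0 ≤ᵐ[volume] z) :
    ∀ᵐ y, ∀ x q, 0 < q → 3 * √q < 1 - ‖x‖ → ‖x - y‖ ≤ √q →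
      z y ≤ 3 ^ N * 13122 * bumpMean z x q := by
  filter_upwards [ae_tendsto_bumpMean hz] with y hlim x q hq hqx hxy
  have hsqrt := Real.sqrt_pos.2 hq
  have hsq : √q ^ 2 = q := Real.sq_sqrt hq.le
  have hy : ‖y‖ < 1 - 2 * √q := by
    have := norm_sub_norm_le y x
    rw [norm_sub_rev] at this
    linarith
  have hclose : z y ≤ 2 * bumpMean z y q :=
    le_two_mul_of_concaveOn_of_tendsto (hc y (by rw [mem_ball_zero_iff]; linarith))
      (fun t _ => bumpMean_nonneg h0 y t) hlim hq (by nlinarith)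
  have hnine : q * bumpMean z x (9 * q) ≤ 9 * q * bumpMean z x q :=
    mul_le_mul_of_concaveOn_of_nonneg (hc x (by rw [mem_ball_zero_iff]; linarith))
      (fun t _ => bumpMean_nonneg h0 x t) hq (by linarith) (by nlinarith)
  have hnine' : bumpMean z x (9 * q) ≤ 9 * bumpMean z x q :=
    le_of_mul_le_mul_left (by linarith) hq
  calc z y ≤ 2 * bumpMean z y q := hclose
    _ ≤ 2 * (3 ^ N * 729 * bumpMean z x (9 * q)) := by
      gcongr; exact bumpMean_le_of_norm_sub_le hz h0 hq hxy
    _ ≤ 2 * (3 ^ N * 729 * (9 * bumpMean z x q)) := by gcongr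
    _ = 3 ^ N * 13122 * bumpMean z x q := by ring

lemma bumpMean_le_of_ae_le {C K : ℝ} {S : Set ℝ^N} (hS : MeasurableSet S)
    (hC : ∀ y, ballBump 3 q x y / ∫ y, ballBump 3 q x y ≤ C / volume.real (closedBall x (√q)))
    (hz : Integrable z) (hK : 0 ≤ K) (hzero : ∀ᵐ y, y ∉ S → z y = 0)
    (hzK : ∀ᵐ y, y ∈ closedBall x (√q) → z y ≤ K) :
    bumpMean z x q ≤ C * (volume.real (S ∩ closedBall x (√q)) / volume.real (closedBall x (√q)))
      * K := by
  have hmean : bumpMean z x q = ∫ y, z y * (ballBump 3 q x y / ∫ y, ballBump 3 q x y) := by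
    rw [bumpMean, bumpMoment, ← integral_div]
    exact integral_congr_ae (.of_forall fun y => mul_div_assoc _ _ _)
  have hmeas : MeasurableSet (S ∩ closedBall x (√q)) := hS.inter measurableSet_closedBall
  have hfin : volume (S ∩ closedBall x (√q)) ≠ ⊤ :=
    ((measure_mono inter_subset_right).trans_lt measure_closedBall_lt_top).ne
  have hint : Integrable fun y => z y * (ballBump 3 q x y / ∫ y, ballBump 3 q x y) := by
    simpa only [mul_div_assoc] using (integrable_mul_ballBump hz 3 q x).div_const _
  calc bumpMean z x q
      ≤ ∫ y, (S ∩ closedBall x (√q)).indicator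
          (fun _ => K * (C / volume.real (closedBall x (√q)))) y := by
        rw [hmean]
        refine integral_mono_ae hint ((integrable_indicator_iff hmeas).2
          (integrableOn_const hfin)) ?_
        filter_upwards [hzero, hzK] with y hy hyK
        by_cases hmem : y ∈ S ∩ closedBall x (√q)
        · rw [indicator_of_mem hmem]
          exact mul_le_mul (hyK hmem.2) (hC y)
            (div_nonneg (ballBump_nonneg _ _ _ _) (integral_nonneg (ballBump_nonneg _ _ _))) hK
        · rw [indicator_of_notMem hmem]
          by_cases hyS : y ∈ S
          · have : ballBump 3 q x y = 0 := by
              by_contra hne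
              exact hmem ⟨hyS, support_ballBump_subset 2 q x hne⟩
            simp [this]
          · simp [hy hyS]
    _ = _ := by
        rw [integral_indicator_const _ hmeas, smul_eq_mul]
        ring

/-- Where `{z ≠ 0}` has density zero, the Harnack-type bound `ae_le_bumpMean` gives `m ≤ θ m` with
`θ < 1` for the mean `m` over a small ball. -/
lemma IsConcaveInMean.ae_exists_bumpMean_eq_zero (hc : IsConcaveInMean z) (hz : Integrable z)
    (h0 : 0 ≤ᵐ[volume] z) :
    ∀ᵐ x ∂ballMeasure N, z x = 0 → ∃ q > 0, √q < 1 - ‖x‖ ∧ bumpMean z x q = 0 := by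
  obtain ⟨C, hC⟩ := exists_forall_ballBump_div_integral_le N
  set S : Set ℝ^N := Function.support (hz.1.mk z) with hSdef
  have hS : MeasurableSet S :=
    hz.1.stronglyMeasurable_mk.measurable (measurableSet_singleton 0).compl
  have hzero : ∀ᵐ y, y ∉ S → z y = 0 := hz.1.ae_eq_mk.mono fun y hy hyS =>
    hy.trans (Function.notMem_support.1 hyS)
  filter_upwards [ae_restrict_of_ae (Besicovitch.ae_tendsto_measure_inter_div_of_measurableSet
    volume hS), ae_restrict_of_ae hz.1.ae_eq_mk, ae_restrict_mem measurableSet_ball]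
    with x hdens hmk hx hzx
  rw [indicator_of_notMem (by rw [hSdef, Function.notMem_support, ← hmk, hzx])] at hdens
  have hreal := (ENNReal.tendsto_toReal ENNReal.zero_ne_top).comp hdens
  have hfactor : Tendsto (fun r => C * (volume.real (S ∩ closedBall x r) /
      volume.real (closedBall x r)) * (3 ^ N * 13122)) (nhdsWithin 0 (Ioi 0)) (nhds 0) := by
    simpa [Function.comp_def, ENNReal.toReal_div, Measure.real] using
      (hreal.const_mul C).mul_const (3 ^ N * 13122 : ℝ)
  have hnorm : 0 < 1 - ‖x‖ := sub_pos.2 (mem_ball_zero_iff.1 hx)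
  have hthird : ∀ᶠ r in nhdsWithin (0 : ℝ) (Ioi 0), r ∈ Ioo 0 ((1 - ‖x‖) / 3) :=
    Ioo_mem_nhdsGT (by positivity)
  obtain ⟨r, hsmall, hr, hrx⟩ := ((hfactor.eventually_lt_const one_pos).and hthird).exists
  have hsqrt : √(r ^ 2) = r := Real.sqrt_sq hr.le
  refine ⟨r ^ 2, by positivity, by rw [hsqrt]; linarith, ?_⟩
  have hmean := bumpMean_nonneg h0 x (r ^ 2)
  have hle := bumpMean_le_of_ae_le hS (hC _ (pow_pos hr 2) x) hz
    (K := 3 ^ N * 13122 * bumpMean z x (r ^ 2)) (by positivity) hzero <|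
    (hc.ae_le_bumpMean hz h0).mono fun y hy hyx => hy x _ (pow_pos hr 2)
      (by rw [hsqrt]; linarith) (by rwa [mem_closedBall_iff_norm, norm_sub_rev] at hyx)
  rw [hsqrt, ← mul_assoc] at hle
  nlinarith

lemma ae_eq_zero_of_bumpMean_eq_zero (hz : Integrable z) (h0 : 0 ≤ᵐ[volume] z) (hq : 0 < q)
    (h : bumpMean z x q = 0) : ∀ᵐ y, y ∈ ball x (√q) → z y = 0 := by
  have hmoment : bumpMoment z 3 x q = 0 :=
    (div_eq_zero_iff.1 h).resolve_right (integral_ballBump_pos hq 2 x).ne'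
  have hprod := (integral_eq_zero_iff_of_nonneg_ae
    (h0.mono fun y hy => mul_nonneg hy (ballBump_nonneg _ _ _ _))
    (integrable_mul_ballBump hz _ _ _)).1 hmoment
  filter_upwards [hprod] with y hy hyx
  refine (mul_eq_zero.1 hy).resolve_right (pow_pos (lt_max_of_lt_left (sub_pos.2 ?_)) 3).ne'
  rw [mem_ball_iff_norm, norm_sub_rev] at hyx
  exact (Real.lt_sqrt (norm_nonneg _)).1 hyx

lemma IsConcaveInMean.bumpMean_eq_zero (hc : IsConcaveInMean z) (h0 : 0 ≤ᵐ[volume] z)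
    {b : ℝ} (hx : x ∈ ball (0 : ℝ^N) 1) (hq : 0 < q) (hqb : q < b) (hb : √b < 1 - ‖x‖)
    (h : bumpMean z x q = 0) : bumpMean z x b = 0 := by
  have hle := mul_le_mul_of_concaveOn_of_nonneg (hc x hx) (fun t _ => bumpMean_nonneg h0 x t) hq
    hqb ((Real.sqrt_lt' (by rw [mem_ball_zero_iff] at hx; linarith)).1 hb)
  rw [h, mul_zero] at hle
  exact le_antisymm (nonpos_of_mul_nonpos_right hle hq) (bumpMean_nonneg h0 x b)

lemma bumpMean_eq_zero_of_ae_eq_zero (h : ∀ᵐ y, y ∈ closedBall x (√q) → z y = 0) :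
    bumpMean z x q = 0 := by
  have hzero : (fun y => z y * ballBump 3 q x y) =ᵐ[volume] 0 := by
    filter_upwards [h] with y hy
    by_cases hmem : y ∈ closedBall x (√q)
    · simp [hy hmem]
    · have : ballBump 3 q x y = 0 := by
        by_contra hne
        exact hmem (support_ballBump_subset 2 q x hne)
      simp [this]
  rw [bumpMean, bumpMoment, integral_congr_ae hzero]
  simp

lemma notMem_support_restrict_support_iff (hz : AEStronglyMeasurable z) :
    x ∉ (volume.restrict (Function.support z)).support ↔
      ∃ V ∈ nhds x, ∀ᵐ y, y ∈ V → z y = 0 := by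
  rw [Measure.notMem_support_iff_exists]
  refine exists_congr fun V => and_congr_right fun _ => ?_
  rw [measure_eq_zero_iff_ae_notMem, ae_restrict_iff'₀ hz.nullMeasurableSet_support]
  exact eventually_congr (.of_forall fun y => by rw [Function.mem_support]; tauto)

/-- Vanishing of the mean over a small ball propagates to all larger concentric balls, in
particular to those reaching points at a distance comparable to the distance to the sphere. -/
lemma IsConcaveInMean.notMem_support_of_mem_closure (hc : IsConcaveInMean z) (hz : Integrable z)
    (h0 : 0 ≤ᵐ[volume] z) (hx : x ∈ ball (0 : ℝ^N) 1)
    (hcl : x ∈ closure (volume.restrict (Function.support z)).supportᶜ) :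
    x ∉ (volume.restrict (Function.support z)).support := by
  have hr : 0 < 1 - ‖x‖ := sub_pos.2 (mem_ball_zero_iff.1 hx)
  obtain ⟨p, hp, hxp⟩ := Metric.mem_closure_iff.1 hcl ((1 - ‖x‖) / 4) (by positivity)
  obtain ⟨V, hV, hVz⟩ := (notMem_support_restrict_support_iff hz.1).1 hp
  obtain ⟨δ, hδ, hδV⟩ := Metric.nhds_basis_closedBall.mem_iff.1 hV
  have hpx : ‖p‖ < 1 - 3 / 4 * (1 - ‖x‖) := by
    have := norm_le_norm_add_norm_sub' p x
    rw [dist_eq_norm, norm_sub_rev] at hxp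
    linarith
  set s := min δ ((1 - ‖x‖) / 4)
  have hs : 0 < s := lt_min hδ (by positivity)
  have hsqrt : ∀ {t : ℝ}, 0 < t → √(t ^ 2) = t := fun ht => Real.sqrt_sq ht.le
  have hsmall : bumpMean z p (s ^ 2) = 0 := bumpMean_eq_zero_of_ae_eq_zero <| by
    rw [hsqrt hs]
    exact hVz.mono fun y hy hys => hy (hδV (closedBall_subset_closedBall (min_le_left _ _) hys))
  have hlarge : bumpMean z p (((1 - ‖x‖) / 2) ^ 2) = 0 :=
    hc.bumpMean_eq_zero h0 (mem_ball_zero_iff.2 (by linarith)) (pow_pos hs 2)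
      (pow_lt_pow_left₀ (by linarith [min_le_right δ ((1 - ‖x‖) / 4)]) hs.le two_ne_zero)
      (by rw [hsqrt (by positivity)]; linarith) hsmall
  have hball := ae_eq_zero_of_bumpMean_eq_zero hz h0 (by positivity) hlarge
  rw [hsqrt (by positivity)] at hball
  exact (notMem_support_restrict_support_iff hz.1).2
    ⟨_, isOpen_ball.mem_nhds (mem_ball.2 (by linarith)), hball⟩

theorem IsConcaveInMean.ae_ne_zero_or_ae_eq_zero (hc : IsConcaveInMean z) (hz : Integrable z)
    (h0 : 0 ≤ᵐ[volume] z) :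
    (∀ᵐ x ∂ballMeasure N, z x ≠ 0) ∨ ∀ᵐ x ∂ballMeasure N, z x = 0 := by
  set μ := volume.restrict (Function.support z)
  rcases (ball (0 : ℝ^N) 1 ∩ μ.supportᶜ).eq_empty_or_nonempty with hempty | hne
  · left
    filter_upwards [hc.ae_exists_bumpMean_eq_zero hz h0, ae_restrict_mem measurableSet_ball]
      with x hx hxB hzx
    obtain ⟨q, hq, -, hqz⟩ := hx hzx
    have hxμ : x ∉ μ.support := (notMem_support_restrict_support_iff hz.1).2
      ⟨_, ball_mem_nhds x (Real.sqrt_pos.2 hq), ae_eq_zero_of_bumpMean_eq_zero hz h0 hq hqz⟩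
    exact (hempty.subset ⟨hxB, hxμ⟩).elim
  · right
    have hsub : ball (0 : ℝ^N) 1 ⊆ μ.supportᶜ :=
      (convex_ball 0 1).isPreconnected.subset_of_closure_inter_subset
        Measure.isOpen_compl_support hne fun x hx =>
          hc.notMem_support_of_mem_closure hz h0 hx.2 hx.1
    have hae : ∀ᵐ x, x ∈ Function.support z → x ∈ μ.support :=
      (ae_restrict_iff'₀ hz.1.nullMeasurableSet_support).1 Measure.support_mem_ae
    filter_upwards [ae_restrict_of_ae hae, ae_restrict_mem measurableSet_ball] with x hx hxB
    exact not_not.1 fun hzx => hsub hxB (hx hzx)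

end StrongMinimumPrinciple

/-! ### Super-solutions touch `1` only on a null set -/

section LtOne

variable {N : ℕ} {lam α β q : ℝ} {U : ℝ^N → ℝ} {x : ℝ^N}

lemma euler_rho (x : ℝ^N) : euler rho x = -2 * ‖x‖ ^ 2 := by
  rw [euler, EuclideanSpace.real_norm_sq_eq, Finset.mul_sum]
  exact Finset.sum_congr rfl fun i _ => by rw [pderiv_rho]; ring

lemma biharm_rho_cube (x : ℝ^N) :
    biharm (fun x : ℝ^N => rho x * rho x * rho x) x = 24 * (N + 2) * ((N + 4) * rho x - 4) := by
  have hρ : ContDiffOn ℝ 2 (rho (N := N)) univ := rho_contDiff.contDiffOn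
  have hnorm : ∀ y : ℝ^N, ‖y‖ ^ 2 = 1 - rho y := fun y => by unfold rho; ring
  have hsq : ∀ y : ℝ^N, lap (fun y : ℝ^N => rho y * rho y) y = 8 + -(4 * N + 8) * rho y :=
    fun y => by
      simp only [lap_rho_mul isOpen_univ hρ (mem_univ y), lap_rho, euler_rho, hnorm]; ring
  have hcube : lap (fun y : ℝ^N => rho y * rho y * rho y) =
      fun y => 24 * rho y + -(6 * N + 24) * (rho y * rho y) := by
    ext y
    simp only [mul_assoc, lap_rho_mul isOpen_univ (hρ.mul hρ) (mem_univ y), hsq,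
      euler_rho_mul isOpen_univ hρ (mem_univ y), euler_rho, hnorm]
    ring
  simp only [biharm, hcube, lap_add isOpen_univ (contDiffOn_const.mul hρ)
      (contDiffOn_const.mul (hρ.mul hρ)) (mem_univ x),
    lap_const_mul isOpen_univ _ hρ (mem_univ x),
    lap_const_mul isOpen_univ _ (hρ.mul hρ) (mem_univ x), hsq, lap_rho]
  ring

lemma integral_ballBump_one_zero (N m : ℕ) :
    ∫ x, ballBump (m + 1) 1 (0 : ℝ^N) x = ∫ x, rho x ^ (m + 1) ∂ballMeasure N := by
  rw [← setIntegral_eq_integral_of_forall_compl_eq_zero (s := ball (0 : ℝ^N) 1)]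
  · refine setIntegral_congr_fun measurableSet_ball fun x hx => ?_
    rw [ballBump, zero_sub, norm_neg]
    exact truncPow_of_nonneg (rho_pos hx).le
  · intro x hx
    rw [mem_ball_zero_iff, not_lt] at hx
    exact ballBump_eq_zero (by rw [zero_sub, norm_neg]; exact one_le_pow₀ hx)

lemma integrable_ballMeasure_of_continuous {f : ℝ^N → ℝ} (hf : Continuous f) :
    Integrable f (ballMeasure N) :=
  memLp_one_iff_integrable.1 (memLp_ballMeasure_of_continuousOn hf.continuousOn 1)

/-- Green's formula applied to the cubic bump `ρ³`. -/
lemma integral_rho_mul_sub (N : ℕ) :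
    ∫ x, rho x * (rho x - 4 / (N + 4)) ∂ballMeasure N = 0 := by
  have hlap : lap (ballBump 3 1 (0 : ℝ^N)) = fun x =>
      24 * ballBump 1 1 0 x + -(6 * N + 24) * ballBump 2 1 0 x := by
    ext x
    rw [lap_ballBump 0]; push_cast; ring
  have hgreen := integral_lap_eq_zero (contDiff_ballBump 2 1 (0 : ℝ^N))
    (hasCompactSupport_ballBump 2 1 0)
  have hi : ∀ m : ℕ, Integrable (ballBump (m + 1) 1 (0 : ℝ^N)) := fun m =>
    (continuous_ballBump _ _ _).integrable_of_hasCompactSupport (hasCompactSupport_ballBump _ _ _)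
  rw [hlap, integral_add ((hi 0).const_mul _) ((hi 1).const_mul _), integral_const_mul,
    integral_const_mul, integral_ballBump_one_zero N 0, integral_ballBump_one_zero N 1] at hgreen
  have hexpand : ∀ x : ℝ^N, rho x * (rho x - 4 / (N + 4)) =
      rho x ^ 2 - 4 / (N + 4) * rho x ^ 1 := fun x => by ring
  simp only [hexpand]
  have hpow : ∀ m : ℕ, Integrable (fun x => rho x ^ m) (ballMeasure N) := fun m =>
    integrable_ballMeasure_of_continuous (rho_continuous.pow m)
  rw [integral_sub (hpow 2) ((hpow 1).const_mul _), integral_const_mul]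
  norm_num at hgreen
  field_simp
  linarith

lemma integral_rho_sub_neg (hN : 0 < N) :
    ∫ x, (rho x - 4 / (N + 4)) ∂ballMeasure N < 0 := by
  set c : ℝ := 4 / (N + 4) with hc
  have hN' : (0 : ℝ) < N := Nat.cast_pos.2 hN
  have hc0 : 0 < c := by positivity
  have hcont : Continuous fun x : ℝ^N => rho x - c := rho_continuous.sub continuous_const
  have hpos : 0 < ∫ x, (rho x - c) ^ 2 ∂ballMeasure N := by
    refine (integral_nonneg fun x => sq_nonneg _).lt_of_ne' fun h => ?_
    have hzero := (integral_eq_zero_iff_of_nonneg (fun x => sq_nonneg (rho x - c))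
      (integrable_ballMeasure_of_continuous (hcont.pow 2))).1 h
    have hrho0 := Measure.eqOn_open_of_ae_eq hzero isOpen_ball (hcont.pow 2).continuousOn
      continuousOn_const (mem_ball_self one_pos)
    have hc1 : c < 1 := by rw [hc, div_lt_one (by positivity)]; linarith
    simp [rho, sub_eq_zero, hc1.ne'] at hrho0
  have hexpand : ∀ x : ℝ^N, (rho x - c) ^ 2 = rho x * (rho x - c) - c * (rho x - c) := fun x => by
    ring
  simp only [hexpand] at hpos
  have hprod : Continuous fun x : ℝ^N => rho x * (rho x - c) := rho_continuous.mul hcont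
  rw [integral_sub (integrable_ballMeasure_of_continuous hprod)
      ((integrable_ballMeasure_of_continuous hcont).const_mul c),
    integral_rho_mul_sub, integral_const_mul, zero_sub, neg_pos] at hpos
  exact neg_of_mul_neg_right hpos hc0.le

lemma integral_one_sub_Phi_mul_biharm_rho_cube_neg (hN : 0 < N) (hα : α < 1) (β : ℝ) :
    ∫ x, (1 - Phi α β x) * biharm (fun x => rho x * rho x * rho x) x ∂ballMeasure N < 0 := by
  have hcont : Continuous fun x : ℝ^N => rho x - 4 / (N + 4) :=
    rho_continuous.sub continuous_const
  have hexpand : ∀ x : ℝ^N, (1 - Phi α β x) * biharm (fun x => rho x * rho x * rho x) x =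
      24 * (N + 2) * (N + 4) * (1 - α) * (rho x - 4 / (N + 4)) +
        24 * (N + 2) * (N + 4) * (β / 2) * (rho x * (rho x - 4 / (N + 4))) := fun x => by
    rw [biharm_rho_cube, Phi, rho]
    field_simp
    ring
  simp only [hexpand]
  have hprod : Continuous fun x : ℝ^N => rho x * (rho x - 4 / (N + 4)) := rho_continuous.mul hcont
  rw [integral_add ((integrable_ballMeasure_of_continuous hcont).const_mul _)
      ((integrable_ballMeasure_of_continuous hprod).const_mul _),
    integral_const_mul, integral_const_mul, integral_rho_mul_sub, mul_zero, add_zero]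
  exact mul_neg_of_pos_of_neg (mul_pos (by positivity) (sub_pos.2 hα)) (integral_rho_sub_neg hN)

lemma Admissible.lt_one (hadm : Admissible α β) : α < 1 := by
  linarith [hadm.1, hadm.2]

lemma IsWeakSuperSolutionAB.not_ae_eq_one (hN : 0 < N) (hadm : Admissible α β)
    (hU : IsWeakSuperSolutionAB N lam α β U) : ¬ ∀ᵐ x ∂ballMeasure N, U x = 1 := by
  intro h1
  have hsuper := hU.2.2 _ (isTest_rho_sq_mul rho_contDiff) fun x hx => by
    have : 0 ≤ rho x := sub_nonneg.2 (pow_le_one₀ (norm_nonneg x) (mem_closedBall_zero_iff.1 hx))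
    positivity
  -- The right-hand side vanishes because `1 / (1 - 1) ^ 2 = 0`.
  have hright : ∫ x, rho x * rho x * rho x / (1 - U x) ^ 2 ∂ballMeasure N = 0 :=
    integral_eq_zero_of_ae (h1.mono fun x hx => by simp [hx])
  have hleft : ∫ x, (U x - Phi α β x) * biharm (fun x => rho x * rho x * rho x) x ∂ballMeasure N =
      ∫ x, (1 - Phi α β x) * biharm (fun x => rho x * rho x * rho x) x ∂ballMeasure N :=
    integral_congr_ae (h1.mono fun x hx => by simp only [hx])
  rw [hright, mul_zero, hleft] at hsuper
  exact hsuper.not_gt (integral_one_sub_Phi_mul_biharm_rho_cube_neg hN hadm.lt_one β)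

lemma IsWeakSuperSolutionAB.integrable_one_sub (hU : IsWeakSuperSolutionAB N lam α β U) :
    Integrable (fun x => 1 - U x) (ballMeasure N) :=
  Integrable.of_bound (aestronglyMeasurable_const.sub hU.aestronglyMeasurable) (1 - α)
    (hU.1.mono fun x hx => by
      rw [Real.norm_of_nonneg (sub_nonneg.2 hx.2)]; linarith [hx.1])

lemma IsWeakSuperSolutionAB.integral_one_sub_mul_biharm_ballBump_nonpos (hadm : Admissible α β)
    (hlam : 0 ≤ lam) (hU : IsWeakSuperSolutionAB N lam α β U) (hx : x ∈ ball (0 : ℝ^N) 1)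
    (hq : q < (1 - ‖x‖) ^ 2) :
    ∫ y, (1 - U y) * biharm (ballBump 5 q x) y ∂ballMeasure N ≤ 0 := by
  have htest := isTest_ballBump hx hq
  have hsuper := hU.2.2 _ htest fun y _ => ballBump_nonneg _ _ _ _
  have hright : 0 ≤ lam * ∫ y, ballBump 5 q x y / (1 - U y) ^ 2 ∂ballMeasure N :=
    mul_nonneg hlam (integral_nonneg fun y => div_nonneg (ballBump_nonneg _ _ _ _) (sq_nonneg _))
  have hPhi : ∫ y, (1 - Phi α β y) * biharm (ballBump 5 q x) y ∂ballMeasure N = 0 := by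
    rw [setIntegral_eq_integral_of_forall_compl_eq_zero,
      integral_one_sub_Phi_mul_biharm α β (contDiff_ballBump 4 q x)
        (hasCompactSupport_ballBump 4 q x)]
    intro y hy
    have hzero := ballBump_eq_zero_of_one_le_norm hx hq (not_lt.1 (mem_ball_zero_iff.not.1 hy))
    rw [biharm_ballBump, hzero 0, hzero 1, hzero 2]
    ring
  have hsplit : ∀ y, (1 - U y) * biharm (ballBump 5 q x) y =
      (1 - Phi α β y) * biharm (ballBump 5 q x) y
        - (U y - Phi α β y) * biharm (ballBump 5 q x) y := fun y => by ring
  have hone : Integrable (fun y => 1 - Phi α β y) (ballMeasure N) :=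
    integrable_ballMeasure_of_continuous (continuous_const.sub (continuous_Phi α β))
  simp only [hsplit]
  rw [integral_sub (htest.integrable_mul_biharm hone)
    (htest.integrable_mul_biharm (integrable_sub_Phi hadm hU.aestronglyMeasurable hU.1)), hPhi]
  linarith

lemma IsWeakSuperSolutionAB.ae_lt_one (hN : 0 < N) (hadm : Admissible α β) (hlam : 0 ≤ lam)
    (hU : IsWeakSuperSolutionAB N lam α β U) : ∀ᵐ x ∂ballMeasure N, U x < 1 := by
  set z : ℝ^N → ℝ := (ball 0 1).indicator fun x => 1 - U x
  have hz : Integrable z := (integrable_indicator_iff measurableSet_ball).2 hU.integrable_one_sub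
  have hzU : ∀ᵐ x ∂ballMeasure N, z x = 1 - U x :=
    (ae_restrict_mem measurableSet_ball).mono fun x hx => indicator_of_mem hx _
  have h0 : 0 ≤ᵐ[volume] z := by
    filter_upwards [(ae_restrict_iff' measurableSet_ball).1 hU.1] with x hx
    exact indicator_apply_nonneg fun hxB => sub_nonneg.2 (hx hxB).2
  have hc : IsConcaveInMean z := fun x hx => concaveOn_bumpMean hz x fun q hq => by
    have hind : ∀ y, z y * biharm (ballBump 5 q x) y =
        (ball 0 1).indicator (fun y => (1 - U y) * biharm (ballBump 5 q x) y) y := fun y =>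
      (indicator_mul_left _ _ _).symm
    simp only [hind]
    rw [integral_indicator measurableSet_ball]
    exact hU.integral_one_sub_mul_biharm_ballBump_nonpos hadm hlam hx hq.2
  rcases hc.ae_ne_zero_or_ae_eq_zero hz h0 with hne | hzero
  · filter_upwards [hne, hzU, hU.1] with x hx hxU hU1
    exact hU1.2.lt_of_ne fun h => hx (by rw [hxU, h, sub_self])
  · refine (hU.not_ae_eq_one hN hadm ?_).elim
    filter_upwards [hzero, hzU] with x hx hxU
    linarith

end LtOne

/-- In dimension zero every biharmonic is zero and `1` is a test function. -/
lemma IsWeakSuperSolutionAB.isWeakSolutionAB_of_dim_zero {lam α β : ℝ} {U : ℝ^0 → ℝ}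
    (hlam : 0 < lam) (hU : IsWeakSuperSolutionAB 0 lam α β U) : IsWeakSolutionAB 0 lam α β U := by
  have hbiharm : ∀ (φ : ℝ^0 → ℝ) x, biharm φ x = 0 := fun φ x => by simp [biharm, lap]
  have hnorm : ∀ x : ℝ^0, ‖x‖ ≠ 1 := fun x => by simp [Subsingleton.elim x 0]
  have hone := hU.2.2 (fun _ => 1)
    ⟨contDiffOn_const, fun x hx => (hnorm x hx).elim, fun x hx => (hnorm x hx).elim⟩
    fun _ _ => zero_le_one
  simp only [hbiharm, mul_zero, integral_zero, one_div] at hone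
  have hnonneg : ∀ x : ℝ^0, 0 ≤ ((1 - U x) ^ 2)⁻¹ := fun x => inv_nonneg.2 (sq_nonneg _)
  have hzero : ∫ x, ((1 - U x) ^ 2)⁻¹ ∂ballMeasure 0 = 0 :=
    le_antisymm (nonpos_of_mul_nonpos_right hone hlam) (integral_nonneg hnonneg)
  have hae := (integral_eq_zero_iff_of_nonneg hnonneg hU.2.1).1 hzero
  refine ⟨hU.1, hU.2.1, fun φ _ => ?_⟩
  have hright : ∫ x, φ x / (1 - U x) ^ 2 ∂ballMeasure 0 = 0 :=
    integral_eq_zero_of_ae (hae.mono fun x hx => by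
      simp only [Pi.zero_apply, div_eq_mul_inv] at hx ⊢; rw [hx, mul_zero])
  simp only [hbiharm, mul_zero, integral_zero, hright]

/-- existence of a weak solution below any weak super-solution. -/
theorem weak_solution_below_supersolution (N : ℕ) (α β lam : ℝ)
    (hadm : Admissible α β) (hlam : 0 < lam)
    (U : EuclideanSpace ℝ (Fin N) → ℝ) (hU : IsWeakSuperSolutionAB N lam α β U) :
    ∃ u : EuclideanSpace ℝ (Fin N) → ℝ, IsWeakSolutionAB N lam α β u ∧
      ∀ᵐ x ∂(volume.restrict (ball (0 : EuclideanSpace ℝ (Fin N)) 1)),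
        α ≤ u x ∧ u x ≤ U x := by
  rcases Nat.eq_zero_or_pos N with rfl | hN
  · exact ⟨U, hU.isWeakSolutionAB_of_dim_zero hlam, hU.1.mono fun x hx => ⟨hx.1, le_rfl⟩⟩
  · exact hU.exists_isWeakSolutionAB hN hadm hlam.le (hU.ae_lt_one hN hadm hlam.le)
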